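/- Let S ⊆ ℝ^n be a bounded Borel set. Then ∫_{S^{n-1}} ∫_ℝ ( V_{n-1}(S ∩ (θ^⊥ + tθ)) )^{n+1} dt d*θ ≤ ( b_{n-1}^{n+1} · b_{n²} / ( b_n^{n} · b_{n²−1} ) ) · ( V_n(S) )^{n}. (This is the case k = n−1 of Gardner's sharp affine inequality ∫_{A_{n,k}} [V_k(S ∩ τ)]^{n+1} dτ ≤ (b_k^{n+1} b_{n(k+1)} / (b_n^{k+1} b_{k(n+1)})) [V_n(S)]^{k+1} for bounded Borel sets.) -/

import Mathlib

open MeasureTheory Metric Real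
open scoped ENNReal NNReal

noncomputable section

/-- The normalized (probability) surface measure `d*θ` on the unit sphere of
`EuclideanSpace ℝ (Fin n)`. -/
def sphMeasure (n : ℕ) : Measure (sphere (0 : EuclideanSpace ℝ (Fin n)) 1) :=
  ((volume : Measure (EuclideanSpace ℝ (Fin n))).toSphere Set.univ)⁻¹ •
    (volume : Measure (EuclideanSpace ℝ (Fin n))).toSphere

/-- The hyperplane Radon transform: `Rf(θ,t) = ∫_{θ^⊥} f(tθ + y) dy`, where `θ^⊥` carries its
canonical Lebesgue measure as an (n-1)-dimensional inner product space. -/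
def Radon (n : ℕ) (f : EuclideanSpace ℝ (Fin n) → ℝ≥0∞)
    (θ : sphere (0 : EuclideanSpace ℝ (Fin n)) 1) (t : ℝ) : ℝ≥0∞ :=
  ∫⁻ y : ((ℝ ∙ (θ : EuclideanSpace ℝ (Fin n)))ᗮ),
    f (t • (θ : EuclideanSpace ℝ (Fin n)) + (y : EuclideanSpace ℝ (Fin n)))

/-- `V_{n-1}(S ∩ (θ^⊥ + tθ))`: the (n-1)-dimensional Lebesgue measure, computed in `θ^⊥`,
of the section of `S` by the affine hyperplane `θ^⊥ + tθ`. -/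
def sectVol (n : ℕ) (S : Set (EuclideanSpace ℝ (Fin n)))
    (θ : sphere (0 : EuclideanSpace ℝ (Fin n)) 1) (t : ℝ) : ℝ≥0∞ :=
  volume {y : ((ℝ ∙ (θ : EuclideanSpace ℝ (Fin n)))ᗮ) |
    t • (θ : EuclideanSpace ℝ (Fin n)) + (y : EuclideanSpace ℝ (Fin n)) ∈ S}

/-- `b_m = π^{m/2}/Γ(m/2+1)`, the volume of the m-dimensional unit ball. -/
def ballVol (m : ℕ) : ℝ := Real.pi ^ ((m : ℝ) / 2) / Real.Gamma ((m : ℝ) / 2 + 1)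

open Set Filter Module
open scoped Topology RealInnerProductSpace

/-
Integrating `simplexVol`, which is `(n - 1)!` times the volume of a simplex in a hyperplane, over
all `n`-tuples of points in a hyperplane section of `S`, and then over all hyperplanes, counts
every `n`-tuple of points of `S` twice: this is the affine Blaschke–Petkantschin formula, and the
result is `2 V_n(S)^n`. It follows from the linear change of variables `p ↦ (⟪p, x i⟫)`, whose
Jacobian is the volume of the parallelepiped spanned by the `x i`.

On the other hand, among the sections of given volume this inner integral is smallest for a ball.
Steiner symmetrization does not increase it, since along parallel lines the simplex volume is the
absolute value of a linear function of the heights, and sets of positive measure outside and inside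
the ball can be traded by a symmetrization until the ball is covered up to a null set. By scaling,
the inner integral therefore dominates a constant times `V_{n-1}^{n+1}`. The formula for the unit
ball has the same constant, and comparing the two eliminates it.
-/

/-- The symmetric rearrangement of a set of reals: the open interval centred at `0` with the same
length. It is empty, instead of the whole line, when `A` has infinite measure. -/
def symmRearrangement (A : Set ℝ) : Set ℝ :=
  Ioo (-(volume.real A / 2)) (volume.real A / 2)

lemma measurableSet_symmRearrangement (A : Set ℝ) : MeasurableSet (symmRearrangement A) :=
  measurableSet_Ioo

lemma volume_symmRearrangement {A : Set ℝ} (hA : volume A ≠ ∞) :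
    volume (symmRearrangement A) = volume A := by
  rw [symmRearrangement, Real.volume_Ioo, sub_neg_eq_add, add_halves, ofReal_measureReal hA]

lemma symmRearrangement_symm (A : Set ℝ) (t : ℝ) :
    -t ∈ symmRearrangement A ↔ t ∈ symmRearrangement A := by
  simp only [symmRearrangement, mem_Ioo, neg_lt_neg_iff, neg_lt (a := t), and_comm]

/-- The centred distribution function of a set of reals; its right inverses carry the symmetric
rearrangement of the set onto the set. -/
def centredCumul (A : Set ℝ) (s : ℝ) : ℝ :=
  volume.real (A ∩ Iic s) - volume.real A / 2

section CentredCumul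

variable {A : Set ℝ}

lemma centredCumul_mono (hfin : volume A ≠ ∞) : Monotone (centredCumul A) := fun _ _ h =>
  sub_le_sub_right (measureReal_mono (by gcongr)
    (measure_ne_top_of_subset inter_subset_left hfin)) _

lemma centredCumul_sub_le (hfin : volume A ≠ ∞) {s s' : ℝ} (h : s ≤ s') :
    centredCumul A s' - centredCumul A s ≤ s' - s := by
  have hsub : A ∩ Iic s' ⊆ A ∩ Iic s ∪ Ioc s s' := fun x hx => by
    rcases le_or_gt x s with hxs | hxs
    exacts [Or.inl ⟨hx.1, hxs⟩, Or.inr ⟨hxs, hx.2⟩]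
  have hle := (measureReal_mono (μ := volume) hsub (measure_union_ne_top
    (measure_ne_top_of_subset inter_subset_left hfin) measure_Ioc_lt_top.ne)).trans
      (measureReal_union_le _ _)
  rw [Real.volume_real_Ioc_of_le h] at hle
  simp only [centredCumul]
  linarith

lemma continuous_centredCumul (hfin : volume A ≠ ∞) : Continuous (centredCumul A) := by
  refine (LipschitzWith.of_le_add fun x y => ?_).continuous
  rcases le_total x y with h | h
  · linarith [centredCumul_mono hfin h, dist_nonneg (x := x) (y := y)]
  · rw [Real.dist_eq, abs_of_nonneg (sub_nonneg.2 h)]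
    linarith [centredCumul_sub_le hfin h]

lemma tendsto_centredCumul_atTop (hfin : volume A ≠ ∞) :
    Tendsto (centredCumul A) atTop (𝓝 (volume.real A / 2)) := by
  have h : Tendsto (fun s => volume (A ∩ Iic s)) atTop (𝓝 (volume (⋃ s, A ∩ Iic s))) :=
    tendsto_measure_iUnion_atTop fun s s' hs => by gcongr
  rw [← inter_iUnion, iUnion_Iic, inter_univ] at h
  have hsub := ((ENNReal.tendsto_toReal hfin).comp h).sub_const (volume.real A / 2)
  rwa [← measureReal_def, sub_half] at hsub

lemma tendsto_centredCumul_atBot (hA : MeasurableSet A) (hfin : volume A ≠ ∞) :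
    Tendsto (centredCumul A) atBot (𝓝 (-(volume.real A / 2))) := by
  have h : Tendsto (fun s => volume (A ∩ Iic s)) atBot (𝓝 (volume (⋂ s, A ∩ Iic s))) :=
    tendsto_measure_iInter_atBot (fun s => (hA.inter measurableSet_Iic).nullMeasurableSet)
      (fun s s' hs => by gcongr)
      ⟨0, measure_ne_top_of_subset inter_subset_left hfin⟩
  have hempty : ⋂ s : ℝ, Iic s = ∅ := iInter_Iic_eq_empty_iff.2 <| by simp
  rw [← inter_iInter, hempty, inter_empty, measure_empty] at h
  have hsub := ((ENNReal.tendsto_toReal ENNReal.zero_ne_top).comp h).sub_const (volume.real A / 2)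
  rwa [ENNReal.toReal_zero, zero_sub] at hsub

lemma exists_centredCumul_eq (hA : MeasurableSet A) (hfin : volume A ≠ ∞) {q : ℝ}
    (hq : q ∈ symmRearrangement A) : ∃ s, centredCumul A s = q :=
  mem_range_of_exists_le_of_exists_ge (continuous_centredCumul hfin)
    (((tendsto_centredCumul_atBot hA hfin).eventually_lt_const hq.1).exists.imp fun _ => le_of_lt)
    (((tendsto_centredCumul_atTop hfin).eventually_const_lt hq.2).exists.imp fun _ => le_of_lt)

lemma centredCumul_le (hfin : volume A ≠ ∞) (x : ℝ) : centredCumul A x ≤ volume.real A / 2 :=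
  (centredCumul_mono hfin).ge_of_tendsto (tendsto_centredCumul_atTop hfin) x

lemma sub_le_sub_of_rightInvOn_centredCumul (hfin : volume A ≠ ∞) {σ : ℝ → ℝ}
    (hσ : RightInvOn σ (centredCumul A) (symmRearrangement A)) {p q : ℝ}
    (hp : p ∈ symmRearrangement A) (hq : q ∈ symmRearrangement A) (h : p ≤ q) :
    q - p ≤ σ q - σ p := by
  rcases le_total (σ p) (σ q) with hle | hle
  · simpa only [hσ hp, hσ hq] using centredCumul_sub_le hfin hle
  · have hqp := centredCumul_mono hfin hle
    rw [hσ hp, hσ hq] at hqp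
    simp [le_antisymm h hqp]

lemma map_rightInvOn_centredCumul (hfin : volume A ≠ ∞) {σ : ℝ → ℝ}
    (hσ : RightInvOn σ (centredCumul A) (symmRearrangement A))
    (hσm : AEMeasurable σ (volume.restrict (symmRearrangement A))) :
    (volume.restrict (symmRearrangement A)).map σ = volume.restrict A := by
  have : IsFiniteMeasure (volume.restrict (symmRearrangement A)) :=
    isFiniteMeasure_restrict.2 (volume_symmRearrangement hfin ▸ hfin)
  refine Measure.ext_of_Iic _ _ fun x => ?_
  set q := centredCumul A x with hq
  have hqA : volume (A ∩ Iic x) = ENNReal.ofReal (q - -(volume.real A / 2)) := by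
    rw [hq, centredCumul, sub_neg_eq_add, sub_add_cancel,
      ofReal_measureReal (measure_ne_top_of_subset inter_subset_left hfin)]
  have hsub : σ ⁻¹' Iic x ∩ symmRearrangement A ⊆ Ioc (-(volume.real A / 2)) q := fun t ht =>
    ⟨ht.2.1, hσ ht.2 ▸ centredCumul_mono hfin ht.1⟩
  have hsup : Ioo (-(volume.real A / 2)) q ⊆ σ ⁻¹' Iic x ∩ symmRearrangement A := fun t ht => by
    have htA : t ∈ symmRearrangement A := ⟨ht.1, ht.2.trans_le (centredCumul_le hfin x)⟩
    refine ⟨show σ t ≤ x from le_of_not_gt fun hlt => ht.2.not_ge ?_, htA⟩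
    exact hσ htA ▸ centredCumul_mono hfin (le_of_lt hlt)
  rw [Measure.map_apply_of_aemeasurable hσm measurableSet_Iic,
    Measure.restrict_apply₀ (hσm.nullMeasurableSet_preimage measurableSet_Iic),
    Measure.restrict_apply measurableSet_Iic, inter_comm (Iic x), hqA]
  refine le_antisymm ((measure_mono hsub).trans_eq Real.volume_Ioc) ?_
  exact Real.volume_Ioo.symm.trans_le (measure_mono hsup)

lemma exists_transport_symmRearrangement (hA : MeasurableSet A) (hfin : volume A ≠ ∞) :
    ∃ σ : ℝ → ℝ, AEMeasurable σ (volume.restrict (symmRearrangement A)) ∧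
      (volume.restrict (symmRearrangement A)).map σ = volume.restrict A ∧
      ∀ t ∈ symmRearrangement A, 2 * |t| ≤ |σ t - σ (-t)| := by
  choose! σ hσ using fun q hq => exists_centredCumul_eq hA hfin (q := q) hq
  have hmono : MonotoneOn σ (symmRearrangement A) := fun p hp q hq h => by
    linarith [sub_le_sub_of_rightInvOn_centredCumul hfin hσ hp hq h]
  have hσm := aemeasurable_restrict_of_monotoneOn (μ := volume)
    (measurableSet_symmRearrangement A) hmono
  refine ⟨σ, hσm, map_rightInvOn_centredCumul hfin hσ hσm, fun t ht => ?_⟩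
  have ht' := (symmRearrangement_symm A t).2 ht
  rcases le_total 0 t with h | h
  · rw [abs_of_nonneg h]
    refine le_trans ?_ (le_abs_self _)
    linarith [sub_le_sub_of_rightInvOn_centredCumul hfin hσ ht' ht (by linarith)]
  · rw [abs_of_nonpos h, abs_sub_comm]
    refine le_trans ?_ (le_abs_self _)
    linarith [sub_le_sub_of_rightInvOn_centredCumul hfin hσ ht ht' (by linarith)]

end CentredCumul

section SignAverage

variable {ι : Type*} [Fintype ι]

lemma sum_sign_abs_sum_sign_mul [DecidableEq ι] (d : ι → ℝ) (δ : ι → ℤˣ) :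
    ∑ ε : ι → ℤˣ, |∑ i, (ε i : ℝ) * ((δ i : ℝ) * d i)| = ∑ ε : ι → ℤˣ, |∑ i, (ε i : ℝ) * d i| := by
  refine (Fintype.sum_equiv (Equiv.mulRight δ) _ _ fun ε => ?_)
  simp [mul_assoc]

lemma convexOn_sum_sign_abs_sum [DecidableEq ι] :
    ConvexOn ℝ univ fun c : ι → ℝ => ∑ ε : ι → ℤˣ, |∑ i, (ε i : ℝ) * c i| := by
  refine ⟨convex_univ, fun x _ y _ a b ha hb _ => ?_⟩
  simp only [smul_eq_mul, Finset.mul_sum, ← Finset.sum_add_distrib]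
  refine Finset.sum_le_sum fun ε _ => ?_
  calc |∑ i, (ε i : ℝ) * ((a • x + b • y) i)|
      = |a * ∑ i, (ε i : ℝ) * x i + b * ∑ i, (ε i : ℝ) * y i| := by
        simp only [Finset.mul_sum, ← Finset.sum_add_distrib, Pi.add_apply, Pi.smul_apply,
          smul_eq_mul]
        congr 1
        exact Finset.sum_congr rfl fun i _ => by ring
    _ ≤ a * |∑ i, (ε i : ℝ) * x i| + b * |∑ i, (ε i : ℝ) * y i| := by
        refine (abs_add_le _ _).trans_eq ?_
        rw [abs_mul, abs_mul, abs_of_nonneg ha, abs_of_nonneg hb]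

-- `c` lies in the box with vertices `±d`, on which a convex function is largest at a vertex.
lemma sum_sign_abs_sum_mono [DecidableEq ι] {c d : ι → ℝ} (h : ∀ i, |c i| ≤ |d i|) :
    ∑ ε : ι → ℤˣ, |∑ i, (ε i : ℝ) * c i| ≤ ∑ ε : ι → ℤˣ, |∑ i, (ε i : ℝ) * d i| := by
  have hbox : c ∈ convexHull ℝ (univ.pi fun i => {-|d i|, |d i|}) := by
    rw [convexHull_pi]
    intro i _
    dsimp only
    rw [convexHull_pair, segment_eq_Icc (neg_le_self (abs_nonneg _))]
    exact abs_le.1 (h i)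
  obtain ⟨v, hv, hcv⟩ := convexOn_sum_sign_abs_sum.exists_ge_of_mem_convexHull (subset_univ _) hbox
  have hsign : ∀ i, ∃ δ : ℤˣ, v i = (δ : ℝ) * d i := fun i => by
    have hvi : |v i| = |d i| := by
      rcases hv i (mem_univ i) with hvi | hvi <;> simp_all
    rcases abs_eq_abs.1 hvi with hvi | hvi
    exacts [⟨1, by simp [hvi]⟩, ⟨-1, by simp [hvi]⟩]
  choose δ hδ using hsign
  refine hcv.trans_eq ?_
  rw [← sum_sign_abs_sum_sign_mul d δ]
  simp only [hδ]

-- Writing `x i (±1) = m i ± d i`, the sum over `ε` and `-ε` removes the midpoints `m i`.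
lemma sum_sign_abs_sum_le [DecidableEq ι] {c : ι → ℝ} {x : ι → ℤˣ → ℝ}
    (h : ∀ i, 2 * |c i| ≤ |x i 1 - x i (-1)|) :
    ∑ ε : ι → ℤˣ, |∑ i, (ε i : ℝ) * c i| ≤ ∑ ε : ι → ℤˣ, |∑ i, x i (ε i)| := by
  have hdiff : ∀ i (e : ℤˣ), (e : ℝ) * ((x i 1 - x i (-1)) / 2) = (x i e - x i (-e)) / 2 := by
    intro i e
    rcases Int.units_eq_one_or e with rfl | rfl
    · simp
    · rw [neg_neg, Units.val_neg, Units.val_one, Int.cast_neg, Int.cast_one]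
      ring
  have hpair : ∑ ε : ι → ℤˣ, |∑ i, x i (-ε i)| = ∑ ε : ι → ℤˣ, |∑ i, x i (ε i)| :=
    Fintype.sum_equiv (Equiv.neg _) _ _ fun ε => rfl
  calc ∑ ε : ι → ℤˣ, |∑ i, (ε i : ℝ) * c i|
      ≤ ∑ ε : ι → ℤˣ, |∑ i, (ε i : ℝ) * ((x i 1 - x i (-1)) / 2)| := by
        refine sum_sign_abs_sum_mono fun i => ?_
        rw [abs_div, abs_two, le_div_iff₀ two_pos, mul_comm]
        exact h i
    _ ≤ ∑ ε : ι → ℤˣ, (|∑ i, x i (ε i)| + |∑ i, x i (-ε i)|) / 2 := by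
        refine Finset.sum_le_sum fun ε _ => ?_
        simp only [hdiff, ← Finset.sum_div, Finset.sum_sub_distrib, abs_div, abs_two]
        gcongr
        exact abs_sub _ _
    _ = ∑ ε : ι → ℤˣ, |∑ i, x i (ε i)| := by
        rw [← Finset.sum_div, Finset.sum_add_distrib, hpair, add_self_div_two]

end SignAverage

lemma lintegral_le_lintegral_of_sum_comp_le {α κ : Type*} [MeasurableSpace α] {μ : Measure α}
    [Fintype κ] [Nonempty κ] {T : κ → α → α} (hT : ∀ k, MeasurePreserving (T k) μ μ)
    {f g : α → ℝ≥0∞} (hf : AEMeasurable f μ) (hg : AEMeasurable g μ)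
    (hfg : ∀ᵐ x ∂μ, ∑ k, f (T k x) ≤ ∑ k, g (T k x)) : ∫⁻ x, f x ∂μ ≤ ∫⁻ x, g x ∂μ := by
  have havg : ∀ h : α → ℝ≥0∞, AEMeasurable h μ →
      ∫⁻ x, ∑ k, h (T k x) ∂μ = Fintype.card κ * ∫⁻ x, h x ∂μ := fun h hh => by
    have hcomp : ∀ k, ∫⁻ x, h (T k x) ∂μ = ∫⁻ x, h x ∂μ := fun k => by
      rw [← lintegral_map' (by rwa [(hT k).map_eq]) (hT k).aemeasurable, (hT k).map_eq]
    rw [lintegral_finsetSum' (f := fun k x => h (T k x)) _ fun k _ =>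
      hh.comp_quasiMeasurePreserving (hT k).quasiMeasurePreserving]
    simp only [hcomp, Finset.sum_const, Finset.card_univ, nsmul_eq_mul]
  rw [← ENNReal.mul_le_mul_iff_right (Nat.cast_ne_zero.2 Fintype.card_ne_zero)
    (ENNReal.natCast_ne_top (Fintype.card κ)), ← havg f hf, ← havg g hg]
  exact lintegral_mono_ae hfg

lemma measurePreserving_sign_mul_symmRearrangement (A : Set ℝ) (e : ℤˣ) :
    MeasurePreserving (fun t : ℝ => (e : ℝ) * t) (volume.restrict (symmRearrangement A))
      (volume.restrict (symmRearrangement A)) := by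
  rcases Int.units_eq_one_or e with rfl | rfl
  · simp only [Units.val_one, Int.cast_one, one_mul]
    exact MeasurePreserving.id _
  · have h := (Measure.measurePreserving_neg (volume : Measure ℝ)).restrict_preimage
      (measurableSet_symmRearrangement A)
    rw [show Neg.neg ⁻¹' symmRearrangement A = symmRearrangement A from
      Set.ext (symmRearrangement_symm A)] at h
    simpa using h

lemma lintegral_abs_sum_symmRearrangement_le {ι : Type*} [Fintype ι] (a : ι → ℝ) {A : ι → Set ℝ}
    (hA : ∀ i, MeasurableSet (A i)) (hfin : ∀ i, volume (A i) ≠ ∞) :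
    ∫⁻ s, ENNReal.ofReal |∑ i, a i * s i|
        ∂(Measure.pi fun i => volume.restrict (symmRearrangement (A i))) ≤
      ∫⁻ s, ENNReal.ofReal |∑ i, a i * s i| ∂(Measure.pi fun i => volume.restrict (A i)) := by
  classical
  choose σ hσm hσmap hσ using fun i => exists_transport_symmRearrangement (hA i) (hfin i)
  set μ : ι → Measure ℝ := fun i => volume.restrict (symmRearrangement (A i)) with hμ
  have hsigma : ∀ i, SigmaFinite ((μ i).map (σ i)) := fun i => by
    rw [hσmap i]; infer_instance
  have hσpi : AEMeasurable (fun t i => σ i (t i)) (Measure.pi μ) :=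
    aemeasurable_pi_lambda _ fun i => (hσm i).comp_quasiMeasurePreserving
      (Measure.quasiMeasurePreserving_eval μ i)
  have hf : Measurable fun s : ι → ℝ => ENNReal.ofReal |∑ i, a i * s i| := by fun_prop
  have hpush := Measure.pi_map_pi (μ := μ) hσm
  simp only [hμ, hσmap] at hpush
  rw [← hpush, lintegral_map' hf.aemeasurable hσpi]
  refine lintegral_le_lintegral_of_sum_comp_le (κ := ι → ℤˣ)
    (T := fun ε t i => (ε i : ℝ) * t i)
    (fun ε => measurePreserving_pi _ _ fun i =>
      measurePreserving_sign_mul_symmRearrangement (A i) (ε i))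
    hf.aemeasurable (hf.comp_aemeasurable hσpi) ?_
  have hmem : ∀ᵐ t ∂Measure.pi μ, ∀ i, t i ∈ symmRearrangement (A i) :=
    eventually_countable_forall.2 fun i => (Measure.quasiMeasurePreserving_eval μ i).ae
      (ae_restrict_mem (measurableSet_symmRearrangement (A i)))
  filter_upwards [hmem] with t ht
  simp only [← ENNReal.ofReal_sum_of_nonneg fun _ _ => abs_nonneg _]
  refine ENNReal.ofReal_le_ofReal ?_
  simp only [mul_left_comm (a _)]
  refine sum_sign_abs_sum_le (x := fun i e => a i * σ i ((e : ℝ) * t i)) fun i => ?_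
  simpa [abs_mul, mul_sub, ← mul_sub, mul_left_comm] using
    mul_le_mul_of_nonneg_left (hσ i (t i) (ht i)) (abs_nonneg (a i))

lemma exists_orthonormalBasis_apply_eq {ι F : Type*} [Fintype ι] [NormedAddCommGroup F]
    [InnerProductSpace ℝ F] [FiniteDimensional ℝ F] (hcard : finrank ℝ F = Fintype.card ι) {u : F}
    (hu : ‖u‖ = 1) : ∃ (b : OrthonormalBasis ι ℝ F) (i : ι), b i = u := by
  have : Nontrivial F := nontrivial_of_ne u 0 (norm_ne_zero_iff.1 (hu ▸ one_ne_zero))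
  have : Nonempty ι := Fintype.card_pos_iff.1 (hcard ▸ finrank_pos)
  let i : ι := Classical.arbitrary ι
  have hv : Orthonormal ℝ (Set.domRestrict {i} fun _ : ι => u) :=
    orthonormal_iff_ite.2 fun j k => by simp [Subsingleton.elim j k, hu]
  obtain ⟨b, hb⟩ := hv.exists_orthonormalBasis_extension_of_card_eq hcard
  exact ⟨b, i, hb i rfl⟩

section Content

variable {ι F : Type*} [Fintype ι] [DecidableEq ι] [NormedAddCommGroup F] [InnerProductSpace ℝ F]

/-- The volume of the parallelepiped spanned by the vectors `x i`, computed from their Gram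
matrix and hence independent of a choice of coordinates. -/
def gramVol (x : ι → F) : ℝ := √(Matrix.gram ℝ x).det

/-- For `m + 1` points in dimension `m`, this is `m!` times the volume of their convex hull. It is
encoded as the volume of the parallelepiped spanned by the lifted points `(1, y i)`. -/
def simplexVol (y : ι → F) : ℝ := gramVol fun i => WithLp.toLp 2 ((1 : ℝ), y i)

lemma gramVol_congr {E : Type*} [NormedAddCommGroup E] [InnerProductSpace ℝ E] {x : ι → F}
    {y : ι → E} (h : ∀ i j, ⟪x i, x j⟫ = ⟪y i, y j⟫) : gramVol x = gramVol y := by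
  rw [gramVol, gramVol, show Matrix.gram ℝ x = Matrix.gram ℝ y from Matrix.ext h]

lemma simplexVol_comp_linearIsometry {E : Type*} [NormedAddCommGroup E] [InnerProductSpace ℝ E]
    (e : F →ₗᵢ[ℝ] E) (y : ι → F) : simplexVol (fun i => e (y i)) = simplexVol y :=
  gramVol_congr fun i j => by simp only [WithLp.prod_inner_apply, e.inner_map_map]

lemma gramVol_smul (c : ι → ℝ) (x : ι → F) :
    gramVol (fun i => c i • x i) = (∏ i, |c i|) * gramVol x := by
  have hgram : Matrix.gram ℝ (fun i => c i • x i) =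
      Matrix.diagonal c * Matrix.gram ℝ x * Matrix.diagonal c := by
    ext i j
    simp only [Matrix.gram_apply, Matrix.mul_diagonal, Matrix.diagonal_mul, real_inner_smul_left,
      real_inner_smul_right]
    ring
  rw [gramVol, hgram, Matrix.det_mul, Matrix.det_mul, Matrix.det_diagonal, mul_right_comm, ← sq,
    Real.sqrt_mul (sq_nonneg _), Real.sqrt_sq_eq_abs, Finset.abs_prod, gramVol]

lemma gramVol_eq_abs_det (b : OrthonormalBasis ι ℝ F) (x : ι → F) :
    gramVol x = |(Matrix.of fun i j => ⟪b i, x j⟫).det| := by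
  have hgram := Matrix.gram_eq_conjTranspose_mul b x
  simp only [b.repr_apply_apply, Matrix.conjTranspose_eq_transpose_of_trivial] at hgram
  rw [gramVol, hgram, Matrix.det_mul, Matrix.det_transpose, ← sq, Real.sqrt_sq_eq_abs]

lemma continuous_gramVol : Continuous (gramVol : (ι → F) → ℝ) := by
  refine Real.continuous_sqrt.comp (Continuous.matrix_det ?_)
  exact continuous_matrix fun i j => by
    simp only [Matrix.gram_apply]
    fun_prop

lemma continuous_simplexVol : Continuous (simplexVol : (ι → F) → ℝ) :=
  continuous_gramVol.comp (by fun_prop)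

variable [FiniteDimensional ℝ F]

-- Expand the determinant along the coordinate in the direction `u`.
lemma exists_gramVol_smul_add_eq (hcard : finrank ℝ F = Fintype.card ι) {u : F} (hu : ‖u‖ = 1)
    {w : ι → F} (hw : ∀ i, ⟪u, w i⟫ = 0) :
    ∃ a : ι → ℝ, ∀ s : ι → ℝ, gramVol (fun i => s i • u + w i) = |∑ i, a i * s i| := by
  obtain ⟨b, i₀, rfl⟩ := exists_orthonormalBasis_apply_eq hcard hu
  let W : Matrix ι ι ℝ := Matrix.of fun i j => ⟪b i, w j⟫
  refine ⟨W.transpose.adjugate i₀, fun s => ?_⟩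
  have hrow : (Matrix.of fun i j => ⟪b i, s j • b i₀ + w j⟫) = W.updateRow i₀ s := by
    ext i j
    rcases eq_or_ne i i₀ with rfl | hi
    · simp [inner_add_right, real_inner_smul_right, hw]
    · simp [inner_add_right, real_inner_smul_right, hi, W]
  rw [gramVol_eq_abs_det b, hrow, ← Matrix.cramer_transpose_apply,
    Matrix.cramer_eq_adjugate_mulVec]
  rfl

lemma gramVol_const_smul_add (hcard : finrank ℝ F = Fintype.card ι) {u : F} (hu : ‖u‖ = 1)
    {w : ι → F} (hw : ∀ i, ⟪u, w i⟫ = 0) (t : ℝ) :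
    gramVol (fun i => t • u + w i) = |t| * gramVol (fun i => u + w i) := by
  obtain ⟨a, ha⟩ := exists_gramVol_smul_add_eq hcard hu hw
  have h1 := ha fun _ => 1
  simp only [one_smul, mul_one] at h1
  rw [ha fun _ => t, h1, ← Finset.sum_mul, abs_mul, mul_comm]

lemma gramVol_smul_add_orthogonal (hcard : finrank ℝ F = Fintype.card ι) {u : F} (hu : ‖u‖ = 1)
    (t : ℝ) (z : ι → (ℝ ∙ u)ᗮ) :
    gramVol (fun i => t • u + (z i : F)) = |t| * simplexVol z := by
  have hz : ∀ i, ⟪u, (z i : F)⟫ = 0 := fun i => Submodule.mem_orthogonal_singleton_iff_inner_right.1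
    (z i).2
  rw [gramVol_const_smul_add hcard hu hz]
  congr 1
  refine gramVol_congr fun i j => ?_
  simp [inner_add_left, inner_add_right, hz, real_inner_comm u, hu, WithLp.prod_inner_apply]

lemma finrank_withLp_real_prod : finrank ℝ (WithLp 2 (ℝ × F)) = finrank ℝ F + 1 := by
  rw [(WithLp.linearEquiv 2 ℝ (ℝ × F)).finrank_eq, finrank_prod, finrank_self, add_comm]

lemma exists_simplexVol_smul_add_eq (hcard : Fintype.card ι = finrank ℝ F + 1) {u : F}
    (hu : ‖u‖ = 1) (z : ι → (ℝ ∙ u)ᗮ) :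
    ∃ a : ι → ℝ, ∀ s : ι → ℝ, simplexVol (fun i => s i • u + (z i : F)) = |∑ i, a i * s i| := by
  have hw : ∀ i, ⟪WithLp.toLp 2 ((0 : ℝ), u), WithLp.toLp 2 ((1 : ℝ), (z i : F))⟫ = 0 := fun i => by
    simpa [WithLp.prod_inner_apply] using
      Submodule.mem_orthogonal_singleton_iff_inner_right.1 (z i).2
  obtain ⟨a, ha⟩ := exists_gramVol_smul_add_eq (finrank_withLp_real_prod.trans hcard.symm)
    (by simpa [WithLp.prod_norm_eq_of_L2] using hu) hw
  refine ⟨a, fun s => ?_⟩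
  rw [← ha s, simplexVol]
  simp [← WithLp.toLp_smul, ← WithLp.toLp_add]

lemma simplexVol_smul (hcard : Fintype.card ι = finrank ℝ F + 1) {c : ℝ} (hc : c ≠ 0)
    (y : ι → F) : simplexVol (fun i => c • y i) = |c| ^ finrank ℝ F * simplexVol y := by
  have hw : ∀ i, ⟪WithLp.toLp 2 ((1 : ℝ), (0 : F)), WithLp.toLp 2 ((0 : ℝ), y i)⟫ = 0 := fun i => by
    simp [WithLp.prod_inner_apply]
  have hlift (t : ℝ) : gramVol (fun i => WithLp.toLp 2 (t, y i)) = |t| * simplexVol y := by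
    simpa [simplexVol, ← WithLp.toLp_smul, ← WithLp.toLp_add] using
      gramVol_const_smul_add (finrank_withLp_real_prod.trans hcard.symm) (by simp) hw t
  calc simplexVol (fun i => c • y i)
      = gramVol (fun i => c • WithLp.toLp 2 (c⁻¹, y i)) := by
        simp [simplexVol, ← WithLp.toLp_smul, hc]
    _ = |c| ^ finrank ℝ F * simplexVol y := by
        rw [gramVol_smul fun _ => c, hlift, Finset.prod_const, Finset.card_univ, hcard, abs_inv,
          pow_succ, mul_assoc, mul_inv_cancel_left₀ (abs_ne_zero.2 hc)]

-- Along a line in the direction of a basis, the determinant is a monic polynomial.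
lemma ae_gramVol_ne_zero [MeasurableSpace F] [BorelSpace F] (hcard : finrank ℝ F = Fintype.card ι) :
    ∀ᵐ x : ι → F, gramVol x ≠ 0 := by
  let b := (stdOrthonormalBasis ℝ F).reindex (Fintype.equivOfCardEq (by simpa using hcard))
  let L : ℝ →ₗ[ℝ] ι → F := LinearMap.toSpanSingleton ℝ (ι → F) b
  refine ae_mem_of_ae_add_linearMap_mem L volume volume
    (continuous_gramVol.measurable (measurableSet_singleton 0).compl) fun x => ?_
  let N : Matrix ι ι ℝ := Matrix.of fun i j => ⟪b i, x j⟫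
  have hpoly : ∀ t : ℝ, gramVol (x + L t) = |(-N).charpoly.eval t| := fun t => by
    rw [gramVol_eq_abs_det b, Matrix.eval_charpoly, sub_neg_eq_add, add_comm]
    congr 2
    ext i j
    simp [N, L, inner_add_right, real_inner_smul_right, b.inner_eq_ite, Matrix.diagonal_apply]
  have hfin : {t : ℝ | (-N).charpoly.IsRoot t}.Finite :=
    Polynomial.finite_setOfPred_isRoot (-N).charpoly_monic.ne_zero
  filter_upwards [hfin.countable.ae_notMem volume] with t ht
  change gramVol (x + L t) ≠ 0
  rw [hpoly]
  exact abs_ne_zero.2 ht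

end Content

section Slicing

variable {F : Type*} [NormedAddCommGroup F] [InnerProductSpace ℝ F] {u : F}

lemma inner_smul_add_orthogonal (hu : ‖u‖ = 1) (s : ℝ) (y : (ℝ ∙ u)ᗮ) :
    ⟪u, s • u + (y : F)⟫ = s := by
  simp [inner_add_right, real_inner_smul_right, hu,
    Submodule.mem_orthogonal_singleton_iff_inner_right.1 y.2]

lemma norm_smul_add_orthogonal_sq (hu : ‖u‖ = 1) (s : ℝ) (y : (ℝ ∙ u)ᗮ) :
    ‖s • u + (y : F)‖ ^ 2 = s ^ 2 + ‖y‖ ^ 2 := by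
  rw [norm_add_sq_real, real_inner_smul_left,
    Submodule.mem_orthogonal_singleton_iff_inner_right.1 y.2, norm_smul, hu, mul_one,
    Real.norm_eq_abs, sq_abs, mul_zero, mul_zero, add_zero, Submodule.coe_norm]

lemma exists_smul_add_orthogonal_eq (u x : F) : ∃ (s : ℝ) (y : (ℝ ∙ u)ᗮ), s • u + (y : F) = x := by
  obtain ⟨v, hv, z, hz, rfl⟩ := (ℝ ∙ u).exists_add_mem_mem_orthogonal x
  obtain ⟨s, rfl⟩ := Submodule.mem_span_singleton.1 hv
  exact ⟨s, ⟨z, hz⟩, rfl⟩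

lemma orthogonalProjectionOnto_smul_add (s : ℝ) (y : (ℝ ∙ u)ᗮ) :
    (ℝ ∙ u)ᗮ.orthogonalProjectionOnto (s • u + (y : F)) = y := by
  rw [map_add, map_smul, Submodule.orthogonalProjectionOnto_orthogonalComplement_singleton_eq_zero,
    smul_zero, zero_add, Submodule.orthogonalProjectionOnto_mem_subspace_eq_self]

/-- The section of `K` by the line through `y ∈ u^⊥` in the direction `u`, as a set of parameters
`s` in `s u + y`. -/
def lineSection (K : Set F) (u : F) (y : (ℝ ∙ u)ᗮ) : Set ℝ := {s | s • u + (y : F) ∈ K}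

lemma lineSection_ball (hu : ‖u‖ = 1) {r : ℝ} (hr : 0 < r) (y : (ℝ ∙ u)ᗮ) :
    lineSection (ball 0 r) u y = Ioo (-√(r ^ 2 - ‖y‖ ^ 2)) (√(r ^ 2 - ‖y‖ ^ 2)) := by
  ext s
  rw [mem_Ioo, ← abs_lt, Real.lt_sqrt (abs_nonneg s), sq_abs, lt_sub_iff_add_lt,
    ← norm_smul_add_orthogonal_sq hu, sq_lt_sq₀ (norm_nonneg _) hr.le, ← mem_ball_zero_iff]
  rfl

lemma symmRearrangement_lineSection_ball (hu : ‖u‖ = 1) {r : ℝ} (hr : 0 < r) (y : (ℝ ∙ u)ᗮ) :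
    symmRearrangement (lineSection (ball 0 r) u y) = lineSection (ball 0 r) u y := by
  rw [lineSection_ball hu hr, symmRearrangement, Real.volume_real_Ioo_of_le
    (neg_le_self (Real.sqrt_nonneg _)), sub_neg_eq_add, add_self_div_two]

variable [MeasurableSpace F] [BorelSpace F]

lemma measurableSet_lineSection {K : Set F} (hK : MeasurableSet K) (y : (ℝ ∙ u)ᗮ) :
    MeasurableSet (lineSection K u y) :=
  (by fun_prop : Measurable fun s : ℝ => s • u + (y : F)) hK

variable [FiniteDimensional ℝ F]

lemma measurePreserving_smul_add (hu : ‖u‖ = 1) :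
    MeasurePreserving fun p : ℝ × (ℝ ∙ u)ᗮ => p.1 • u + (p.2 : F) := by
  let L : WithLp 2 (ℝ × (ℝ ∙ u)ᗮ) →ₗᵢ[ℝ] F :=
    { toFun := fun p => p.fst • u + (p.snd : F)
      map_add' := fun p q => by
        simp only [WithLp.add_fst, WithLp.add_snd, Submodule.coe_add]; module
      map_smul' := fun c p => by
        simp only [WithLp.smul_fst, WithLp.smul_snd, Submodule.coe_smul, RingHom.id_apply]; module
      norm_map' := fun p => by
        rw [← sq_eq_sq₀ (norm_nonneg _) (norm_nonneg _), WithLp.prod_norm_sq_eq_of_L2]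
        simpa using norm_smul_add_orthogonal_sq hu p.fst p.snd }
  have hfin : finrank ℝ (WithLp 2 (ℝ × (ℝ ∙ u)ᗮ)) = finrank ℝ F := by
    rw [finrank_withLp_real_prod, ← (ℝ ∙ u).finrank_add_finrank_orthogonal,
      finrank_span_singleton (norm_ne_zero_iff.1 (hu ▸ one_ne_zero)), add_comm]
  exact (L.toLinearIsometryEquiv hfin).measurePreserving.comp
    (WithLp.volume_preserving_toLp ℝ _)

lemma measurable_volume_lineSection (u : F) {K : Set F} (hK : MeasurableSet K) :
    Measurable fun y => volume (lineSection K u y) :=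
  measurable_measure_prodMk_right
    ((by fun_prop : Measurable fun p : ℝ × (ℝ ∙ u)ᗮ => p.1 • u + (p.2 : F)) hK)

lemma volume_eq_lintegral_lineSection (hu : ‖u‖ = 1) {K : Set F} (hK : MeasurableSet K) :
    volume K = ∫⁻ y, volume (lineSection K u y) := by
  have h := measurePreserving_smul_add hu
  rw [← h.measure_preimage hK.nullMeasurableSet, Measure.volume_eq_prod,
    Measure.prod_apply_symm (h.measurable hK)]
  rfl

lemma lintegral_pi_eq_lintegral_lineSection {ι : Type*} [Fintype ι] (hu : ‖u‖ = 1) {K : Set F}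
    (hK : MeasurableSet K) {f : (ι → F) → ℝ≥0∞} (hf : Measurable f) :
    ∫⁻ x, f x ∂(Measure.pi fun _ => volume.restrict K) =
      ∫⁻ y : ι → (ℝ ∙ u)ᗮ, ∫⁻ s, f (fun i => s i • u + (y i : F))
        ∂(Measure.pi fun i => volume.restrict (lineSection K u (y i))) := by
  have hpres := (volume_preserving_pi fun _ : ι => measurePreserving_smul_add hu).comp
    (volume_measurePreserving_arrowProdEquivProdArrow ℝ (ℝ ∙ u)ᗮ ι).symm
  have hKm : MeasurableSet (univ.pi fun _ : ι => K) := MeasurableSet.univ_pi fun _ => hK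
  have hfK := hf.indicator hKm
  rw [← Measure.restrict_pi_pi, ← lintegral_indicator hKm, ← volume_pi]
  refine (hpres.lintegral_comp hfK).symm.trans ?_
  rw [Measure.volume_eq_prod]
  refine (lintegral_prod_symm' _ (hfK.comp hpres.measurable)).trans (lintegral_congr fun y => ?_)
  rw [← Measure.restrict_pi_pi, ← lintegral_indicator
    (MeasurableSet.univ_pi fun i => measurableSet_lineSection hK (y i)), ← volume_pi]
  refine lintegral_congr fun s => ?_
  simp only [indicator, mem_univ_pi]
  rfl

end Slicing

section Steiner

lemma symmRearrangement_subset {A B : Set ℝ} (h : volume A ≤ volume B) (hB : volume B ≠ ∞) :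
    symmRearrangement A ⊆ symmRearrangement B := by
  have hle : volume.real A ≤ volume.real B := ENNReal.toReal_mono hB h
  exact Ioo_subset_Ioo (by linarith) (by linarith)

lemma volume_symmRearrangement_diff_add_le {A B : Set ℝ} (hA : MeasurableSet A)
    (hB : MeasurableSet B) (hAfin : volume A ≠ ∞) (hBfin : volume B ≠ ∞) (τ : ℝ) :
    volume (symmRearrangement B \ symmRearrangement A) + volume {s | s ∈ A \ B ∧ s + τ ∈ B \ A} ≤
      volume (B \ A) := by
  have hleft : volume {s | s ∈ A \ B ∧ s + τ ∈ B \ A} ≤ volume (A \ B) :=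
    measure_mono fun s hs => hs.1
  have hright : volume {s | s ∈ A \ B ∧ s + τ ∈ B \ A} ≤ volume (B \ A) := by
    rw [← measure_preimage_add_right volume τ (B \ A)]
    exact measure_mono fun s hs => hs.2
  have hcap : volume (A ∩ B) ≠ ∞ := measure_inter_ne_top_of_left_ne_top hAfin
  have hAdec : volume (A ∩ B) + volume (A \ B) = volume A := measure_inter_add_sdiff A hB
  have hBdec : volume (A ∩ B) + volume (B \ A) = volume B := by
    rw [inter_comm, measure_inter_add_sdiff B hA]
  rcases le_total (volume A) (volume B) with hle | hle
  · rw [measure_sdiff (symmRearrangement_subset hle hBfin)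
      (measurableSet_symmRearrangement A).nullMeasurableSet
      (by rwa [volume_symmRearrangement hAfin]), volume_symmRearrangement hAfin,
      volume_symmRearrangement hBfin, ← hAdec, ← hBdec, ENNReal.add_sub_add_eq_sub_left hcap]
    refine (add_le_add_right hleft _).trans (tsub_add_cancel_of_le ?_).le
    rwa [← ENNReal.add_le_add_iff_left hcap, hAdec, hBdec]
  · rwa [sdiff_eq_empty.2 (symmRearrangement_subset hle hAfin), measure_empty, zero_add]

variable {F : Type*} [NormedAddCommGroup F] [InnerProductSpace ℝ F]

/-- The Steiner symmetral of `K` in the direction `u`: every section of `K` by a line parallel to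
`u` is replaced by the interval of the same length centred on `u^⊥`. -/
def steinerSymm (u : F) (K : Set F) : Set F :=
  {x | ⟪u, x⟫ ∈ symmRearrangement (lineSection K u ((ℝ ∙ u)ᗮ.orthogonalProjectionOnto x))}

variable {u : F} {K : Set F}

lemma lineSection_steinerSymm (hu : ‖u‖ = 1) (K : Set F) (y : (ℝ ∙ u)ᗮ) :
    lineSection (steinerSymm u K) u y = symmRearrangement (lineSection K u y) := by
  ext s
  change ⟪u, s • u + (y : F)⟫ ∈ symmRearrangement
    (lineSection K u ((ℝ ∙ u)ᗮ.orthogonalProjectionOnto (s • u + (y : F)))) ↔ _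
  rw [inner_smul_add_orthogonal hu, orthogonalProjectionOnto_smul_add]

lemma volume_lineSection_ne_top (hu : ‖u‖ = 1) {R : ℝ} (hR : 0 < R) (h : K ⊆ ball 0 R)
    (y : (ℝ ∙ u)ᗮ) : volume (lineSection K u y) ≠ ∞ := by
  refine ne_top_of_le_ne_top ?_ (measure_mono fun s hs => h hs :
    volume (lineSection K u y) ≤ volume (lineSection (ball 0 R) u y))
  rw [lineSection_ball hu hR]
  exact measure_Ioo_lt_top.ne

lemma steinerSymm_subset_ball (hu : ‖u‖ = 1) {R : ℝ} (hR : 0 < R) (h : K ⊆ ball 0 R) :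
    steinerSymm u K ⊆ ball 0 R := by
  intro x hx
  obtain ⟨s, y, rfl⟩ := exists_smul_add_orthogonal_eq u x
  have hs : s ∈ lineSection (steinerSymm u K) u y := hx
  rw [lineSection_steinerSymm hu] at hs
  change s ∈ lineSection (ball 0 R) u y
  rw [← symmRearrangement_lineSection_ball hu hR]
  exact symmRearrangement_subset (measure_mono fun s hs => h hs)
    (volume_lineSection_ne_top hu hR subset_rfl y) hs

variable [FiniteDimensional ℝ F] [MeasurableSpace F] [BorelSpace F]

lemma measurableSet_steinerSymm (u : F) (hK : MeasurableSet K) :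
    MeasurableSet (steinerSymm u K) := by
  have hlen : Measurable fun x : F =>
      volume.real (lineSection K u ((ℝ ∙ u)ᗮ.orthogonalProjectionOnto x)) :=
    ((measurable_volume_lineSection u hK).comp
      (ContinuousLinearMap.continuous _).measurable).ennreal_toReal
  have hinner : Measurable fun x : F => ⟪u, x⟫ := by fun_prop
  exact (measurableSet_lt (hlen.div_const 2).neg hinner).inter
    (measurableSet_lt hinner (hlen.div_const 2))

lemma volume_steinerSymm (hu : ‖u‖ = 1) (hK : MeasurableSet K)
    (hfin : ∀ y, volume (lineSection K u y) ≠ ∞) : volume (steinerSymm u K) = volume K := by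
  rw [volume_eq_lintegral_lineSection hu (measurableSet_steinerSymm u hK),
    volume_eq_lintegral_lineSection hu hK]
  simp only [lineSection_steinerSymm hu, volume_symmRearrangement (hfin _)]

lemma volume_ball_diff_steinerSymm_add_le (hu : ‖u‖ = 1) (hK : MeasurableSet K)
    (hfin : ∀ y, volume (lineSection K u y) ≠ ∞) {r : ℝ} (hr : 0 < r) (τ : ℝ) :
    volume (ball 0 r \ steinerSymm u K) +
        volume {x | x ∈ K \ ball 0 r ∧ x + τ • u ∈ ball 0 r \ K} ≤ volume (ball 0 r \ K) := by
  have hB : MeasurableSet (ball (0 : F) r) := measurableSet_ball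
  have hBS := hB.diff (measurableSet_steinerSymm u hK)
  have hmoved : MeasurableSet {x | x ∈ K \ ball 0 r ∧ x + τ • u ∈ ball 0 r \ K} :=
    (hK.diff hB).inter ((measurable_add_const _) (hB.diff hK))
  rw [volume_eq_lintegral_lineSection hu hBS, volume_eq_lintegral_lineSection hu hmoved,
    volume_eq_lintegral_lineSection hu (hB.diff hK),
    ← lintegral_add_left (measurable_volume_lineSection u hBS)]
  refine lintegral_mono fun y => ?_
  have hsymm : lineSection (ball 0 r \ steinerSymm u K) u y =
      symmRearrangement (lineSection (ball 0 r) u y) \ symmRearrangement (lineSection K u y) := by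
    rw [symmRearrangement_lineSection_ball hu hr, ← lineSection_steinerSymm hu K]
    rfl
  have hshift : lineSection {x | x ∈ K \ ball 0 r ∧ x + τ • u ∈ ball 0 r \ K} u y =
      {s | s ∈ lineSection K u y \ lineSection (ball 0 r) u y ∧
        s + τ ∈ lineSection (ball 0 r) u y \ lineSection K u y} := by
    ext s
    change (s • u + (y : F) ∈ K \ ball 0 r ∧ s • u + (y : F) + τ • u ∈ ball 0 r \ K) ↔
      (s • u + (y : F) ∈ K \ ball 0 r ∧ (s + τ) • u + (y : F) ∈ ball 0 r \ K)
    rw [add_right_comm, ← add_smul]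
  simp only [hsymm, hshift]
  exact volume_symmRearrangement_diff_add_le (measurableSet_lineSection hK y)
    (measurableSet_lineSection hB y) (hfin y) (volume_lineSection_ne_top hu hr subset_rfl y) τ

/-- The integral of `simplexVol` over all families of points of `K` indexed by `ι`: the mean
content of the random simplices with vertices in `K`, before normalization. -/
def simplexMoment (ι : Type*) [Fintype ι] [DecidableEq ι] (K : Set F) : ℝ≥0∞ :=
  ∫⁻ y, ENNReal.ofReal (simplexVol y) ∂(Measure.pi fun _ : ι => volume.restrict K)

variable {ι : Type*} [Fintype ι] [DecidableEq ι]

lemma measurable_ofReal_simplexVol :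
    Measurable fun y : ι → F => ENNReal.ofReal (simplexVol y) :=
  continuous_simplexVol.measurable.ennreal_ofReal

lemma simplexMoment_steinerSymm_le (hcard : Fintype.card ι = finrank ℝ F + 1) (hu : ‖u‖ = 1)
    (hK : MeasurableSet K) (hfin : ∀ y, volume (lineSection K u y) ≠ ∞) :
    simplexMoment ι (steinerSymm u K) ≤ simplexMoment ι K := by
  rw [simplexMoment, simplexMoment, lintegral_pi_eq_lintegral_lineSection hu
    (measurableSet_steinerSymm u hK) measurable_ofReal_simplexVol,
    lintegral_pi_eq_lintegral_lineSection hu hK measurable_ofReal_simplexVol]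
  refine lintegral_mono fun y => ?_
  obtain ⟨a, ha⟩ := exists_simplexVol_smul_add_eq hcard hu y
  simp only [ha, lineSection_steinerSymm hu]
  exact lintegral_abs_sum_symmRearrangement_le a (fun i => measurableSet_lineSection hK (y i))
    fun i => hfin (y i)

end Steiner

section Shift

variable {G : Type*} [AddCommGroup G] [MeasurableSpace G] [MeasurableAdd₂ G] (μ : Measure G)
  [SFinite μ] [μ.IsAddLeftInvariant]

lemma lintegral_measure_inter_shift {A C : Set G} (hA : MeasurableSet A) (hC : MeasurableSet C) :
    ∫⁻ z, μ {x | x ∈ A ∧ x + z ∈ C} ∂μ = μ A * μ C := by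
  let T : Set (G × G) := {p | p.1 ∈ A ∧ p.1 + p.2 ∈ C}
  have hT : MeasurableSet T := (measurable_fst hA).inter (measurable_add hC)
  have hslice : ∀ x, μ (Prod.mk x ⁻¹' T) = A.indicator (fun _ => μ C) x := fun x => by
    by_cases hx : x ∈ A
    · rw [indicator_of_mem hx, ← measure_preimage_add μ x C]
      exact congrArg μ (ext fun z => and_iff_right hx)
    · rw [indicator_of_notMem hx, ← measure_empty (μ := μ)]
      exact congrArg μ (eq_empty_of_forall_notMem fun z hz => hx hz.1)
  calc ∫⁻ z, μ {x | x ∈ A ∧ x + z ∈ C} ∂μ = μ.prod μ T := (Measure.prod_apply_symm hT).symm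
    _ = μ A * μ C := by
      rw [Measure.prod_apply hT]
      simp only [hslice]
      rw [lintegral_indicator hA, setLIntegral_const, mul_comm]

end Shift

section Limit

variable {ι α : Type*} [Fintype ι] [MeasurableSpace α] {μ : Measure α} [SigmaFinite μ]

lemma lintegral_pi_restrict_mono {A B : Set α} (h : A ⊆ B) (f : (ι → α) → ℝ≥0∞) :
    ∫⁻ x, f x ∂(Measure.pi fun _ => μ.restrict A) ≤
      ∫⁻ x, f x ∂(Measure.pi fun _ => μ.restrict B) := by
  rw [← Measure.restrict_pi_pi, ← Measure.restrict_pi_pi]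
  exact lintegral_mono_set (pi_mono fun _ _ => h)

lemma lintegral_pi_restrict_le_of_tsum_ne_top {B : Set α} {K : ℕ → Set α}
    (hK : ∀ j, MeasurableSet (K j)) (hB : MeasurableSet B) (hsum : ∑' j, μ (B \ K j) ≠ ∞)
    {f : (ι → α) → ℝ≥0∞} (hf : Measurable f) {c : ℝ≥0∞}
    (hc : ∀ j, ∫⁻ x, f x ∂(Measure.pi fun _ => μ.restrict (K j)) ≤ c) :
    ∫⁻ x, f x ∂(Measure.pi fun _ => μ.restrict B) ≤ c := by
  have hKm (j : ℕ) : MeasurableSet (univ.pi fun _ : ι => K j) := MeasurableSet.univ_pi fun _ => hK j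
  have hmem : ∀ᵐ x ∂(Measure.pi fun _ : ι => μ.restrict B), ∀ᶠ j in atTop,
      x ∈ univ.pi fun _ => K j := by
    have hpt : ∀ᵐ x ∂μ.restrict B, ∀ᶠ j in atTop, x ∈ K j := by
      rw [ae_restrict_iff' hB]
      filter_upwards [ae_eventually_notMem hsum] with x hx hxB
      exact hx.mono fun j hj => by_contra fun hxK => hj ⟨hxB, hxK⟩
    have hcoord (i : ι) : ∀ᵐ x ∂(Measure.pi fun _ : ι => μ.restrict B), ∀ᶠ j in atTop, x i ∈ K j :=
      (Measure.quasiMeasurePreserving_eval (fun _ : ι => μ.restrict B) i).ae hpt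
    filter_upwards [ae_all_iff.2 hcoord] with x hx
    filter_upwards [eventually_all.2 hx] with j hj i _ using hj i
  calc ∫⁻ x, f x ∂(Measure.pi fun _ => μ.restrict B)
      ≤ ∫⁻ x, liminf (fun j => (univ.pi fun _ => K j).indicator f x) atTop
          ∂(Measure.pi fun _ => μ.restrict B) := by
        refine lintegral_mono_ae (hmem.mono fun x hx => ?_)
        exact le_liminf_of_le (by isBoundedDefault)
          (hx.mono fun j hj => (indicator_of_mem hj f).ge)
    _ ≤ liminf (fun j => ∫⁻ x, (univ.pi fun _ => K j).indicator f x
          ∂(Measure.pi fun _ => μ.restrict B)) atTop :=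
        lintegral_liminf_le fun j => hf.indicator (hKm j)
    _ ≤ c := by
        refine liminf_le_of_le (by isBoundedDefault) fun b hb => ?_
        obtain ⟨j, hj⟩ := hb.exists
        refine hj.trans ((?_ : _ ≤ _).trans (hc j))
        rw [lintegral_indicator (hKm j), Measure.restrict_pi_pi]
        simp only [Measure.restrict_restrict (hK j)]
        exact lintegral_pi_restrict_mono inter_subset_left f

end Limit

section BusemannGroemer

variable {F : Type*} [NormedAddCommGroup F] [InnerProductSpace ℝ F] [FiniteDimensional ℝ F]
  [MeasurableSpace F] [BorelSpace F] {K : Set F} {R r : ℝ}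

lemma exists_volume_inter_shift_ge {A C : Set F} (hA : MeasurableSet A) (hC : MeasurableSet C)
    (hR : 0 < R) (hAR : A ⊆ ball 0 R) (hCR : C ⊆ ball 0 R) :
    ∃ z, volume A * volume C / volume (ball (0 : F) (2 * R)) ≤ volume {x | x ∈ A ∧ x + z ∈ C} := by
  set ψ : F → ℝ≥0∞ := fun z => volume {x | x ∈ A ∧ x + z ∈ C}
  have hsupp : ∀ z ∉ ball (0 : F) (2 * R), ψ z = 0 := fun z hz => by
    refine measure_mono_null (fun x hx => hz ?_) measure_empty
    have hx1 := mem_ball_zero_iff.1 (hAR hx.1)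
    have hx2 := mem_ball_zero_iff.1 (hCR hx.2)
    rw [mem_ball_zero_iff, ← add_sub_cancel_left x z]
    linarith [norm_sub_le (x + z) x]
  have hint : ∫⁻ z in ball 0 (2 * R), ψ z = volume A * volume C := by
    rw [setLIntegral_eq_of_support_subset (Function.support_subset_iff'.2 hsupp),
      lintegral_measure_inter_shift volume hA hC]
  have hfin : volume A * volume C ≠ ∞ := ENNReal.mul_ne_top
    (ne_top_of_le_ne_top measure_ball_lt_top.ne (measure_mono hAR))
    (ne_top_of_le_ne_top measure_ball_lt_top.ne (measure_mono hCR))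
  obtain ⟨z, -, hz⟩ := exists_setLAverage_le (measure_ball_pos volume (0 : F) (by positivity)).ne'
    measurableSet_ball.nullMeasurableSet (hint.trans_ne hfin)
  refine ⟨z, ?_⟩
  rwa [setLAverage_eq, hint] at hz

lemma exists_volume_ball_diff_steinerSymm_add_le (hK : MeasurableSet K) (hr : 0 < r) (hrR : r ≤ R)
    (hKR : K ⊆ ball 0 R) (hvol : volume K = volume (ball (0 : F) r))
    (hne : volume (ball 0 r \ K) ≠ 0) :
    ∃ u : F, ‖u‖ = 1 ∧ volume (ball 0 r \ steinerSymm u K) +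
      volume (ball 0 r \ K) ^ 2 / volume (ball (0 : F) (2 * R)) ≤ volume (ball 0 r \ K) := by
  have hR : 0 < R := hr.trans_le hrR
  have hB : MeasurableSet (ball (0 : F) r) := measurableSet_ball
  have hsymm : volume (K \ ball 0 r) = volume (ball 0 r \ K) :=
    measure_sdiff_symm hK.nullMeasurableSet hB.nullMeasurableSet hvol
      (measure_inter_ne_top_of_right_ne_top measure_ball_lt_top.ne)
  obtain ⟨z, hz⟩ := exists_volume_inter_shift_ge (hK.diff hB) (hB.diff hK) hR
    (sdiff_subset.trans hKR) (sdiff_subset.trans (ball_subset_ball hrR))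
  rw [hsymm, ← sq] at hz
  have hz0 : z ≠ 0 := by
    rintro rfl
    have hempty : {x | x ∈ K \ ball 0 r ∧ x + 0 ∈ ball 0 r \ K} = ∅ :=
      eq_empty_of_forall_notMem fun x hx => hx.1.2 (by simpa using hx.2.1)
    rw [hempty, measure_empty, nonpos_iff_eq_zero] at hz
    exact (ENNReal.div_pos (pow_ne_zero 2 hne) measure_ball_lt_top.ne).ne' hz
  have hu : ‖‖z‖⁻¹ • z‖ = 1 := by simpa using norm_smul_inv_norm (𝕜 := ℝ) hz0
  refine ⟨‖z‖⁻¹ • z, hu, (add_le_add_right hz _).trans ?_⟩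
  simpa [smul_smul, hz0] using
    volume_ball_diff_steinerSymm_add_le hu hK (volume_lineSection_ne_top hu hR hKR) hr ‖z‖

variable {ι : Type*} [Fintype ι] [DecidableEq ι]

-- The infimum of the uncovered volume over all sets obtainable from `K` is zero, since one more
-- symmetrization would push a near-minimizer below a positive infimum.
lemma exists_simplexMoment_le_volume_ball_diff_lt (hcard : Fintype.card ι = finrank ℝ F + 1)
    (hK : MeasurableSet K) (hr : 0 < r) (hrR : r ≤ R) (hKR : K ⊆ ball 0 R)
    (hvol : volume K = volume (ball (0 : F) r)) {ε : ℝ≥0∞} (hε : 0 < ε) :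
    ∃ K' : Set F, MeasurableSet K' ∧ simplexMoment ι K' ≤ simplexMoment ι K ∧
      volume (ball 0 r \ K') < ε := by
  let 𝒦 : Set (Set F) := {K' | MeasurableSet K' ∧ K' ⊆ ball 0 R ∧
    volume K' = volume (ball (0 : F) r) ∧ simplexMoment ι K' ≤ simplexMoment ι K}
  set η : ℝ≥0∞ := sInf ((fun K' => volume (ball 0 r \ K')) '' 𝒦)
  have hη_le {K' : Set F} (h : K' ∈ 𝒦) : η ≤ volume (ball 0 r \ K') := sInf_le ⟨K', h, rfl⟩
  have hη_top : η ≠ ∞ := ne_top_of_le_ne_top measure_ball_lt_top.ne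
    ((hη_le ⟨hK, hKR, hvol, le_rfl⟩).trans (measure_mono sdiff_subset))
  have hη : η = 0 := by
    by_contra hη0
    have hgain : η ^ 2 / volume (ball (0 : F) (2 * R)) ≠ 0 :=
      (ENNReal.div_pos (pow_ne_zero 2 hη0) measure_ball_lt_top.ne).ne'
    obtain ⟨_, ⟨K', hK', rfl⟩, hlt⟩ := sInf_lt_iff.1 (ENNReal.lt_add_right hη_top hgain)
    have ⟨hK'm, hK'R, hK'vol, hK'mom⟩ := hK'
    obtain ⟨u, hu, hle⟩ := exists_volume_ball_diff_steinerSymm_add_le hK'm hr hrR hK'R hK'vol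
      ((pos_iff_ne_zero.2 hη0).trans_le (hη_le hK')).ne'
    have hR : 0 < R := hr.trans_le hrR
    have hfin := volume_lineSection_ne_top hu hR hK'R
    have hsteiner : steinerSymm u K' ∈ 𝒦 :=
      ⟨measurableSet_steinerSymm u hK'm, steinerSymm_subset_ball hu hR hK'R,
        (volume_steinerSymm hu hK'm hfin).trans hK'vol,
        (simplexMoment_steinerSymm_le hcard hu hK'm hfin).trans hK'mom⟩
    refine hlt.not_ge (le_trans ?_ hle)
    gcongr
    exacts [hη_le hsteiner, hη_le hK']
  obtain ⟨_, ⟨K', hK', rfl⟩, hlt⟩ := sInf_lt_iff.1 (hη.trans_lt hε)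
  exact ⟨K', hK'.1, hK'.2.2.2, hlt⟩

lemma simplexMoment_ball_le (hcard : Fintype.card ι = finrank ℝ F + 1) (hK : MeasurableSet K)
    (hbdd : Bornology.IsBounded K) (hr : 0 < r) (hvol : volume K = volume (ball (0 : F) r)) :
    simplexMoment ι (ball (0 : F) r) ≤ simplexMoment ι K := by
  obtain ⟨R, hR⟩ := hbdd.subset_ball 0
  obtain ⟨δ, hδ, hsum⟩ := ENNReal.exists_pos_sum_of_countable' one_ne_zero ℕ
  choose K' hK'm hK'mom hK'vol using fun j =>
    exists_simplexMoment_le_volume_ball_diff_lt hcard hK hr (le_max_right R r)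
      (hR.trans (ball_subset_ball (le_max_left R r))) hvol (hδ j)
  have hfin : ∑' j, volume (ball 0 r \ K' j) ≠ ∞ :=
    ((ENNReal.tsum_le_tsum fun j => (hK'vol j).le).trans_lt (hsum.trans ENNReal.one_lt_top)).ne
  exact lintegral_pi_restrict_le_of_tsum_ne_top hK'm measurableSet_ball hfin
    measurable_ofReal_simplexVol hK'mom

lemma simplexMoment_preimage_linearIsometryEquiv {E : Type*} [NormedAddCommGroup E]
    [InnerProductSpace ℝ E] [FiniteDimensional ℝ E] [MeasurableSpace E] [BorelSpace E]
    (e : F ≃ₗᵢ[ℝ] E) {K : Set E} (hK : MeasurableSet K) :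
    simplexMoment ι (e ⁻¹' K) = simplexMoment ι K := by
  have hpres : MeasurePreserving (fun (x : ι → F) i => e (x i))
      (Measure.pi fun _ => volume.restrict (e ⁻¹' K)) (Measure.pi fun _ => volume.restrict K) :=
    measurePreserving_pi _ _ fun _ => e.measurePreserving.restrict_preimage hK
  rw [simplexMoment, simplexMoment, ← hpres.lintegral_comp measurable_ofReal_simplexVol]
  exact lintegral_congr fun x =>
    congrArg _ (simplexVol_comp_linearIsometry e.toLinearIsometry x).symm

open scoped Pointwise in
lemma simplexMoment_smul (hcard : Fintype.card ι = finrank ℝ F + 1) {c : ℝ} (hc : 0 < c)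
    (hK : MeasurableSet K) : simplexMoment ι (c • K) =
      ENNReal.ofReal c ^ (finrank ℝ F * (finrank ℝ F + 2)) * simplexMoment ι K := by
  have hmap : (volume : Measure (ι → F)) =
      ENNReal.ofReal c ^ finrank ℝ (ι → F) • volume.map (c • ·) := by
    rw [Measure.map_addHaar_smul volume hc.ne', smul_smul, ← ENNReal.ofReal_pow hc.le,
      ← ENNReal.ofReal_mul (by positivity), abs_of_pos (by positivity),
      mul_inv_cancel₀ (by positivity), ENNReal.ofReal_one, one_smul]
  have hpre : (c • · : (ι → F) → ι → F) ⁻¹' (univ.pi fun _ => c • K) = univ.pi fun _ => K := by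
    ext x
    simp only [mem_preimage, mem_univ_pi, Pi.smul_apply, smul_mem_smul_set_iff₀ hc.ne']
  rw [simplexMoment, simplexMoment, ← Measure.restrict_pi_pi, ← Measure.restrict_pi_pi, ← volume_pi,
    hmap, Measure.restrict_smul, lintegral_smul_measure,
    setLIntegral_map (MeasurableSet.univ_pi fun _ => hK.const_smul₀ c)
      measurable_ofReal_simplexVol (by fun_prop), hpre, ← hmap]
  have hscale (x : ι → F) : ENNReal.ofReal (simplexVol (c • x)) =
      ENNReal.ofReal c ^ finrank ℝ F * ENNReal.ofReal (simplexVol x) := by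
    rw [← ENNReal.ofReal_pow hc.le, ← ENNReal.ofReal_mul (by positivity)]
    congr 1
    exact (simplexVol_smul hcard hc.ne' x).trans (by rw [abs_of_pos hc])
  simp only [hscale]
  rw [lintegral_const_mul' _ _ (by finiteness), smul_eq_mul, ← mul_assoc, ← pow_add,
    finrank_pi_fintype, Finset.sum_const, Finset.card_univ, hcard, smul_eq_mul]
  congr 2
  ring

open scoped Pointwise in
lemma simplexMoment_ball [Nontrivial F] (hcard : Fintype.card ι = finrank ℝ F + 1) (hr : 0 ≤ r) :
    simplexMoment ι (ball (0 : F) r) =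
      ENNReal.ofReal r ^ (finrank ℝ F * (finrank ℝ F + 2)) * simplexMoment ι (ball (0 : F) 1) := by
  rcases hr.eq_or_lt with rfl | hr
  · have : Nonempty ι := Fintype.card_pos_iff.1 (hcard ▸ Nat.succ_pos _)
    have hdim : finrank ℝ F * (finrank ℝ F + 2) ≠ 0 :=
      mul_ne_zero finrank_pos.ne' (Nat.succ_ne_zero _)
    rw [simplexMoment, ← Measure.restrict_pi_pi, ball_zero, univ_pi_empty, Measure.restrict_empty,
      lintegral_zero_measure, ENNReal.ofReal_zero, zero_pow hdim, zero_mul]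
  · rw [← simplexMoment_smul hcard hr measurableSet_ball, smul_unitBall_of_pos hr]

lemma mul_volume_pow_le_simplexMoment_of_isBounded [Nontrivial F]
    (hcard : Fintype.card ι = finrank ℝ F + 1) (hK : MeasurableSet K)
    (hbdd : Bornology.IsBounded K) :
    simplexMoment ι (ball (0 : F) 1) * (volume K / volume (ball (0 : F) 1)) ^ (finrank ℝ F + 2) ≤
      simplexMoment ι K := by
  set v := volume (ball (0 : F) 1)
  have hv0 : v ≠ 0 := (measure_ball_pos volume 0 one_pos).ne'
  have hv : v ≠ ∞ := measure_ball_lt_top.ne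
  by_cases hK0 : volume K = 0
  · simp [hK0]
  have hq : volume K / v ≠ ∞ := ENNReal.div_ne_top hbdd.measure_lt_top.ne hv0
  have hqpos : 0 < (volume K / v).toReal := ENNReal.toReal_pos (ENNReal.div_pos hK0 hv).ne' hq
  obtain ⟨r, hr, hrq⟩ : ∃ r : ℝ, 0 < r ∧ ENNReal.ofReal r ^ finrank ℝ F = volume K / v := by
    refine ⟨(volume K / v).toReal ^ ((finrank ℝ F : ℝ)⁻¹), by positivity, ?_⟩
    rw [← ENNReal.ofReal_pow (by positivity),
      Real.rpow_inv_natCast_pow hqpos.le finrank_pos.ne', ENNReal.ofReal_toReal hq]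
  have hvol : volume K = volume (ball (0 : F) r) := by
    rw [Measure.addHaar_ball_of_pos _ _ hr, ENNReal.ofReal_pow hr.le, hrq,
      ENNReal.div_mul_cancel hv0 hv]
  calc simplexMoment ι (ball (0 : F) 1) * (volume K / v) ^ (finrank ℝ F + 2)
      = simplexMoment ι (ball (0 : F) r) := by
        rw [simplexMoment_ball hcard hr.le, ← hrq, ← pow_mul, mul_comm]
    _ ≤ simplexMoment ι K := simplexMoment_ball_le hcard hK hbdd hr hvol

lemma mul_volume_pow_le_simplexMoment [Nontrivial F] (hcard : Fintype.card ι = finrank ℝ F + 1)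
    (hK : MeasurableSet K) :
    simplexMoment ι (ball (0 : F) 1) * (volume K / volume (ball (0 : F) 1)) ^ (finrank ℝ F + 2) ≤
      simplexMoment ι K := by
  have hmono : Monotone fun j : ℕ => K ∩ ball (0 : F) j := fun i j hij =>
    inter_subset_inter_right K (ball_subset_ball (Nat.cast_le.2 hij))
  have hunion : volume K = ⨆ j : ℕ, volume (K ∩ ball (0 : F) j) := by
    rw [← hmono.measure_iUnion, ← inter_iUnion, iUnion_ball_nat, inter_univ]
  rw [hunion, ENNReal.iSup_div, ENNReal.iSup_pow, ENNReal.mul_iSup]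
  refine iSup_le fun j => ?_
  exact (mul_volume_pow_le_simplexMoment_of_isBounded hcard (hK.inter measurableSet_ball)
    (isBounded_ball.subset inter_subset_right)).trans
      (lintegral_pi_restrict_mono inter_subset_left _)

end BusemannGroemer

section ProductMeasure

lemma lintegral_fin_nat_prod_eq_prod {n : ℕ} {E : Fin n → Type*} {mE : ∀ i, MeasurableSpace (E i)}
    {μ : (i : Fin n) → Measure (E i)} [∀ i, SigmaFinite (μ i)] {f : (i : Fin n) → E i → ℝ≥0∞}
    (hf : ∀ i, Measurable (f i)) :
    ∫⁻ x, ∏ i, f i (x i) ∂(Measure.pi μ) = ∏ i, ∫⁻ x, f i x ∂(μ i) := by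
  induction n with
  | zero => simp
  | succ n ih =>
    have htail : Measurable fun x : (i : Fin n) → E i.succ => ∏ i : Fin n, f i.succ (x i) :=
      Finset.measurable_prod _ fun i _ => (hf i.succ).comp (measurable_pi_apply i)
    rw [← (measurePreserving_piFinSuccAbove μ 0).symm.lintegral_comp (by fun_prop),
      Fin.prod_univ_succ, ← ih fun i => hf i.succ,
      ← lintegral_prod_mul (hf 0).aemeasurable htail.aemeasurable]
    refine lintegral_congr fun p => ?_
    rw [Fin.prod_univ_succ]
    rfl

variable {ι : Type*} [Fintype ι]

lemma lintegral_fintype_prod_eq_prod {E : ι → Type*} {mE : ∀ i, MeasurableSpace (E i)}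
    {μ : (i : ι) → Measure (E i)} [∀ i, SigmaFinite (μ i)] {f : (i : ι) → E i → ℝ≥0∞}
    (hf : ∀ i, Measurable (f i)) :
    ∫⁻ x, ∏ i, f i (x i) ∂(Measure.pi μ) = ∏ i, ∫⁻ x, f i x ∂(μ i) := by
  let e := (Fintype.equivFin ι).symm
  rw [← (measurePreserving_piCongrLeft μ e).lintegral_comp (by fun_prop)]
  simp_rw [← e.prod_comp, MeasurableEquiv.coe_piCongrLeft, Equiv.piCongrLeft_apply_apply]
  exact lintegral_fin_nat_prod_eq_prod fun i => hf (e i)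

lemma pi_const_smul {α : Type*} [MeasurableSpace α] (μ : Measure α) [SigmaFinite μ] (c : ℝ≥0) :
    Measure.pi (fun _ : ι => c • μ) = (c : ℝ≥0∞) ^ Fintype.card ι • Measure.pi fun _ : ι => μ := by
  refine Measure.pi_eq fun s _ => ?_
  simp only [Measure.smul_apply, Measure.nnreal_smul_coe_apply, Measure.pi_pi, smul_eq_mul,
    Finset.prod_mul_distrib, Finset.prod_const, Finset.card_univ]

end ProductMeasure

lemma setLIntegral_Ioo_ofReal_pow (m : ℕ) {t : ℝ} (ht : 0 ≤ t) :
    ∫⁻ s in Ioo 0 t, ENNReal.ofReal (s ^ m) = ENNReal.ofReal (t ^ (m + 1) / (m + 1)) := by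
  have hpow : ∫ s in Ioo 0 t, s ^ m = t ^ (m + 1) / (m + 1) := by
    rw [← integral_Ioc_eq_integral_Ioo, ← intervalIntegral.integral_of_le ht, integral_pow,
      zero_pow m.succ_ne_zero, sub_zero]
  rw [← hpow, ofReal_integral_eq_lintegral_ofReal]
  · exact ((continuous_pow m).integrableOn_Icc (a := 0) (b := t)).mono_set Ioo_subset_Icc_self
  · exact (ae_restrict_mem measurableSet_Ioo).mono fun s hs => pow_nonneg hs.1.le m

lemma setLIntegral_Ioi_comp_inv (f : ℝ → ℝ≥0∞) :
    ∫⁻ r in Ioi (0 : ℝ), f r = ∫⁻ t in Ioi (0 : ℝ), ENNReal.ofReal (t ^ 2)⁻¹ * f t⁻¹ := by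
  have h := lintegral_image_eq_lintegral_abs_deriv_mul (measurableSet_Ioi (a := (0 : ℝ)))
    (fun t ht => (hasDerivAt_inv (ne_of_gt ht)).hasDerivWithinAt) inv_injective.injOn f
  have himage : (fun t : ℝ => t⁻¹) '' Ioi 0 = Ioi 0 := by
    rw [image_inv_eq_inv]
    ext r
    exact inv_pos (G₀ := ℝ)
  rw [himage] at h
  simpa only [abs_neg, abs_inv, abs_pow, sq_abs] using h

section Polar

variable {E : Type*} [NormedAddCommGroup E] [NormedSpace ℝ E] [FiniteDimensional ℝ E] [Nontrivial E]
  [MeasurableSpace E] [BorelSpace E] (μ : Measure E) [μ.IsAddHaarMeasure] {f : E → ℝ≥0∞}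

lemma lintegral_eq_lintegral_toSphere (hf : Measurable f) :
    ∫⁻ p, f p ∂μ = ∫⁻ θ : sphere (0 : E) 1, ∫⁻ r in Ioi (0 : ℝ),
      ENNReal.ofReal (r ^ (finrank ℝ E - 1)) * f (r • (θ : E)) ∂volume ∂μ.toSphere := by
  let g : sphere (0 : E) 1 × Ioi (0 : ℝ) → ℝ≥0∞ := fun q => f ((q.2 : ℝ) • (q.1 : E))
  have hg : Measurable g := by fun_prop
  have hpolar (p : ({0}ᶜ : Set E)) : f p = g (homeomorphUnitSphereProd E p) := by
    simp [g, smul_smul, norm_ne_zero_iff.2 p.2]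
  have hcompl : ∫⁻ p, f p ∂μ = ∫⁻ p : ({0}ᶜ : Set E), f p ∂(μ.comap (↑)) := by
    rw [lintegral_subtype_comap (measurableSet_singleton 0).compl, restrict_compl_singleton]
  rw [hcompl, lintegral_congr hpolar,
    μ.measurePreserving_homeomorphUnitSphereProd.lintegral_comp hg,
    lintegral_prod _ hg.aemeasurable]
  refine lintegral_congr fun θ => ?_
  rw [Measure.volumeIoiPow, lintegral_withDensity_eq_lintegral_mul _ (by fun_prop) (by fun_prop)]
  exact lintegral_subtype_comap measurableSet_Ioi
    fun r => ENNReal.ofReal (r ^ (finrank ℝ E - 1)) * f (r • (θ : E))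

lemma lintegral_eq_lintegral_toSphere_inv (hf : Measurable f) :
    ∫⁻ p, f p ∂μ = ∫⁻ θ : sphere (0 : E) 1, ∫⁻ t in Ioi (0 : ℝ),
      ENNReal.ofReal (t ^ (finrank ℝ E + 1))⁻¹ * f (t⁻¹ • (θ : E)) ∂volume ∂μ.toSphere := by
  rw [lintegral_eq_lintegral_toSphere μ hf]
  refine lintegral_congr fun θ => ?_
  rw [setLIntegral_Ioi_comp_inv]
  refine setLIntegral_congr_fun measurableSet_Ioi fun t _ => ?_
  rw [← mul_assoc, ← ENNReal.ofReal_mul (by positivity), inv_pow, ← mul_inv, ← pow_add,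
    show 2 + (finrank ℝ E - 1) = finrank ℝ E + 1 by have := finrank_pos (R := ℝ) (M := E); lia]

end Polar

section BlaschkePetkantschin

variable {ι E : Type*} [Fintype ι] [DecidableEq ι] [NormedAddCommGroup E]
  [InnerProductSpace ℝ E] {S : Set E}

/-- The open cone with apex `0` over the section of `S` by the hyperplane `⟪p, ·⟫ = 1`. -/
def sectionCone (S : Set E) (p : E) : Set E := {x | ⟪p, x⟫ ∈ Ioo 0 1 ∧ ⟪p, x⟫⁻¹ • x ∈ S}

/-- The weight `s⁻¹`, cut off to the pairs with `0 < s < 1` and `s⁻¹ • y ∈ S`. For `s = ⟪p, y⟫`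
it is supported on the points `y` of `sectionCone S p`. -/
def radialWeight (S : Set E) (s : ℝ) (y : E) : ℝ≥0∞ :=
  {q : ℝ × E | q.1 ∈ Ioo 0 1 ∧ q.1⁻¹ • q.2 ∈ S}.indicator (fun q => ENNReal.ofReal q.1⁻¹) (s, y)

lemma radialWeight_of_mem {s : ℝ} {y : E} (h : s ∈ Ioo 0 1 ∧ s⁻¹ • y ∈ S) :
    radialWeight S s y = ENNReal.ofReal s⁻¹ :=
  indicator_of_mem (a := (s, y)) h _

lemma radialWeight_of_notMem {s : ℝ} {y : E} (h : ¬(s ∈ Ioo 0 1 ∧ s⁻¹ • y ∈ S)) :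
    radialWeight S s y = 0 :=
  indicator_of_notMem (a := (s, y)) h _

variable [FiniteDimensional ℝ E] [MeasurableSpace E] [BorelSpace E]

lemma gramVol_mul_lintegral_comp_inner (hcard : finrank ℝ E = Fintype.card ι) {x : ι → E}
    (hx : gramVol x ≠ 0) {f : (ι → ℝ) → ℝ≥0∞} (hf : Measurable f) :
    ENNReal.ofReal (gramVol x) * ∫⁻ p : E, f (fun i => ⟪p, x i⟫) = ∫⁻ s, f s := by
  let b := (stdOrthonormalBasis ℝ E).reindex (Fintype.equivOfCardEq (by simpa using hcard))
  let A : Matrix ι ι ℝ := Matrix.of fun i j => ⟪b j, x i⟫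
  have hdet : gramVol x = |A.det| := by
    rw [gramVol_eq_abs_det b, ← Matrix.det_transpose]
    rfl
  have hA : A.det ≠ 0 := abs_ne_zero.1 (hdet ▸ hx)
  have hcoord (p : E) : (fun i => ⟪p, x i⟫) = A.toLin' (b.repr p).ofLp := by
    ext i
    simp [A, Matrix.mulVec, dotProduct, ← b.sum_inner_mul_inner p (x i), b.repr_apply_apply,
      real_inner_comm, mul_comm]
  have hmeas : Measurable A.toLin' := (LinearMap.continuous_of_finiteDimensional _).measurable
  simp only [hcoord]
  rw [b.measurePreserving_repr.lintegral_comp (f := fun q => f (A.toLin' q.ofLp)) (by fun_prop),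
    (PiLp.volume_preserving_ofLp ι).lintegral_comp (f := fun q => f (A.toLin' q)) (by fun_prop),
    ← lintegral_map hf hmeas, Real.map_matrix_volume_pi_eq_smul_volume_pi hA,
    lintegral_smul_measure, smul_eq_mul, ← mul_assoc, hdet, ← ENNReal.ofReal_mul (abs_nonneg _),
    ← abs_mul, mul_inv_cancel₀ hA, abs_one, ENNReal.ofReal_one, one_mul]

/-- The integral, over tuples of points of `sectionCone S p`, of the volume of the parallelepiped
spanned by their central projections to the hyperplane `⟪p, ·⟫ = 1`. -/
def coneMoment (ι : Type*) [Fintype ι] [DecidableEq ι] (S : Set E) (p : E) : ℝ≥0∞ :=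
  ∫⁻ x in univ.pi fun _ : ι => sectionCone S p,
    ENNReal.ofReal (gramVol fun i => ⟪p, x i⟫⁻¹ • x i)

lemma measurableSet_sectionCone (hS : MeasurableSet S) (p : E) :
    MeasurableSet (sectionCone S p) := by
  have hinner : Measurable fun x : E => ⟪p, x⟫ := by fun_prop
  exact (hinner measurableSet_Ioo).inter ((hinner.inv.smul measurable_id) hS)

lemma measurable_radialWeight (hS : MeasurableSet S) :
    Measurable fun q : ℝ × E => radialWeight S q.1 q.2 :=
  (by fun_prop : Measurable fun q : ℝ × E => ENNReal.ofReal q.1⁻¹).indicator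
    ((measurable_fst measurableSet_Ioo).inter ((measurable_fst.inv.smul measurable_snd) hS))

lemma coneMoment_eq_lintegral_radialWeight (hS : MeasurableSet S) (p : E) :
    coneMoment ι S p =
      ∫⁻ x : ι → E, ENNReal.ofReal (gramVol x) * ∏ i, radialWeight S ⟪p, x i⟫ (x i) := by
  rw [coneMoment,
    ← lintegral_indicator (MeasurableSet.univ_pi fun _ => measurableSet_sectionCone hS p)]
  refine lintegral_congr fun x => ?_
  by_cases hx : x ∈ univ.pi fun _ : ι => sectionCone S p
  · have hmem (i : ι) : x i ∈ sectionCone S p := hx i (mem_univ i)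
    have hpos (i : ι) : 0 ≤ ⟪p, x i⟫⁻¹ := inv_nonneg.2 (hmem i).1.1.le
    have hweight (i : ι) : radialWeight S ⟪p, x i⟫ (x i) = ENNReal.ofReal ⟪p, x i⟫⁻¹ :=
      radialWeight_of_mem (hmem i)
    rw [indicator_of_mem hx, gramVol_smul, ENNReal.ofReal_mul (by positivity), mul_comm]
    simp only [hweight, abs_of_nonneg (hpos _), ENNReal.ofReal_prod_of_nonneg fun i _ => hpos i]
  · obtain ⟨i, hi⟩ : ∃ i, x i ∉ sectionCone S p := by simpa using hx
    have hweight : radialWeight S ⟪p, x i⟫ (x i) = 0 := radialWeight_of_notMem hi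
    rw [indicator_of_notMem hx, Finset.prod_eq_zero (Finset.mem_univ i) hweight, mul_zero]

lemma measurable_gramVol_mul_prod_radialWeight (hS : MeasurableSet S) :
    Measurable fun q : E × (ι → E) =>
      ENNReal.ofReal (gramVol q.2) * ∏ i, radialWeight S ⟪q.1, q.2 i⟫ (q.2 i) := by
  refine (continuous_gramVol.measurable.comp measurable_snd).ennreal_ofReal.mul
    (Finset.measurable_prod _ fun i _ => ?_)
  exact (measurable_radialWeight hS).comp
    (by fun_prop : Measurable fun q : E × (ι → E) => (⟪q.1, q.2 i⟫, q.2 i))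

lemma measurable_coneMoment (hS : MeasurableSet S) : Measurable (coneMoment (E := E) ι S) := by
  rw [funext (coneMoment_eq_lintegral_radialWeight hS)]
  exact (measurable_gramVol_mul_prod_radialWeight hS).lintegral_prod_right'

lemma lintegral_radialWeight_right (hS : MeasurableSet S) (s : ℝ) :
    ∫⁻ y : E, radialWeight S s y = (Ioo 0 1).indicator
      (fun s => ENNReal.ofReal (s ^ finrank ℝ E * s⁻¹) * volume S) s := by
  by_cases hs : s ∈ Ioo 0 1
  · have hweight (y : E) : radialWeight S s y =
        ((s⁻¹ • ·) ⁻¹' S).indicator (fun _ => ENNReal.ofReal s⁻¹) y := by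
      by_cases hy : s⁻¹ • y ∈ S
      · rw [radialWeight_of_mem ⟨hs, hy⟩, indicator_of_mem (mem_preimage.2 hy)]
      · rw [radialWeight_of_notMem fun h => hy h.2, indicator_of_notMem (mt mem_preimage.1 hy)]
    rw [lintegral_congr hweight, lintegral_indicator_const ((measurable_const_smul s⁻¹) hS),
      Measure.addHaar_preimage_smul _ (inv_ne_zero hs.1.ne'), indicator_of_mem hs, inv_pow, inv_inv,
      abs_of_pos (pow_pos hs.1 _), ENNReal.ofReal_mul (pow_nonneg hs.1.le _)]
    ring
  · have hweight (y : E) : radialWeight S s y = 0 := radialWeight_of_notMem fun h => hs h.1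
    simp only [hweight, lintegral_zero, indicator_of_notMem hs]

lemma lintegral_lintegral_radialWeight [Nontrivial E] (hS : MeasurableSet S) :
    ∫⁻ (y : E) (s : ℝ), radialWeight S s y = volume S / finrank ℝ E := by
  obtain ⟨m, hm⟩ := Nat.exists_eq_add_one.2 (finrank_pos (R := ℝ) (M := E))
  rw [lintegral_lintegral_swap (f := fun y s => radialWeight S s y)
    ((measurable_radialWeight hS).comp measurable_swap).aemeasurable]
  simp only [lintegral_radialWeight_right hS]
  rw [lintegral_indicator measurableSet_Ioo, lintegral_mul_const _ (by fun_prop)]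
  have hpow : ∀ s ∈ Ioo (0 : ℝ) 1,
      ENNReal.ofReal (s ^ finrank ℝ E * s⁻¹) = ENNReal.ofReal (s ^ m) := fun s hs => by
    rw [hm, pow_succ, mul_inv_cancel_right₀ hs.1.ne']
  rw [setLIntegral_congr_fun measurableSet_Ioo hpow, setLIntegral_Ioo_ofReal_pow m zero_le_one,
    one_pow, one_div, ENNReal.ofReal_inv_of_pos (by positivity), mul_comm, div_eq_mul_inv, hm,
    ← Nat.cast_succ, ENNReal.ofReal_natCast]

lemma lintegral_coneMoment [Nontrivial E] (hcard : finrank ℝ E = Fintype.card ι)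
    (hS : MeasurableSet S) :
    ∫⁻ p, coneMoment ι S p = (volume S / finrank ℝ E) ^ finrank ℝ E := by
  have hweight := measurable_radialWeight hS
  have hinner (x : ι → E) (hx : gramVol x ≠ 0) :
      ∫⁻ p : E, ENNReal.ofReal (gramVol x) * ∏ i, radialWeight S ⟪p, x i⟫ (x i) =
        ∏ i, ∫⁻ s, radialWeight S s (x i) := by
    rw [lintegral_const_mul' _ _ ENNReal.ofReal_ne_top, gramVol_mul_lintegral_comp_inner hcard hx
      (f := fun s => ∏ i, radialWeight S (s i) (x i)) (by fun_prop)]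
    exact lintegral_fintype_prod_eq_prod (f := fun i s => radialWeight S s (x i)) fun i =>
      by fun_prop
  calc ∫⁻ p, coneMoment ι S p
      = ∫⁻ (p : E) (x : ι → E),
          ENNReal.ofReal (gramVol x) * ∏ i, radialWeight S ⟪p, x i⟫ (x i) :=
        lintegral_congr (coneMoment_eq_lintegral_radialWeight hS)
    _ = ∫⁻ x : ι → E, ∏ i, ∫⁻ s, radialWeight S s (x i) := by
        rw [lintegral_lintegral_swap (measurable_gramVol_mul_prod_radialWeight hS).aemeasurable]
        exact lintegral_congr_ae ((ae_gramVol_ne_zero hcard).mono hinner)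
    _ = (volume S / finrank ℝ E) ^ finrank ℝ E := by
        rw [volume_pi, lintegral_fintype_prod_eq_prod (f := fun _ y => ∫⁻ s, radialWeight S s y)
          fun _ => (hweight.comp measurable_swap).lintegral_prod_right',
          lintegral_lintegral_radialWeight hS, Finset.prod_const, Finset.card_univ, hcard]

end BlaschkePetkantschin

section HyperplaneSection

variable {E : Type*} [NormedAddCommGroup E] [InnerProductSpace ℝ E] {S : Set E} {u : E}

/-- The section of `S` by the affine hyperplane `u^⊥ + t u`, as a subset of `u^⊥`. -/
def hyperplaneSection (S : Set E) (u : E) (t : ℝ) : Set (ℝ ∙ u)ᗮ := {y | t • u + (y : E) ∈ S}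

lemma smul_add_mem_sectionCone_iff (hu : ‖u‖ = 1) {t : ℝ} (ht : 0 < t) (s : ℝ) (y : (ℝ ∙ u)ᗮ) :
    s • u + (y : E) ∈ sectionCone S (t⁻¹ • u) ↔
      s ∈ Ioo 0 t ∧ (s / t)⁻¹ • y ∈ hyperplaneSection S u t := by
  have hinner : ⟪t⁻¹ • u, s • u + (y : E)⟫ = s / t := by
    rw [real_inner_smul_left, inner_smul_add_orthogonal hu, inv_mul_eq_div]
  have hmem : s / t ∈ Ioo 0 1 ↔ s ∈ Ioo 0 t := by
    rw [mem_Ioo, mem_Ioo, div_pos_iff_of_pos_right ht, div_lt_one ht]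
  rw [sectionCone, mem_ofPred_eq, hinner, hmem]
  refine and_congr_right fun hs => ?_
  rw [smul_add, smul_smul, inv_div, div_mul_cancel₀ t hs.1.ne']
  rfl

lemma finrank_orthogonal_add_one [FiniteDimensional ℝ E] (hu : ‖u‖ = 1) :
    finrank ℝ (ℝ ∙ u)ᗮ + 1 = finrank ℝ E := by
  have hu0 : u ≠ 0 := by rintro rfl; simp at hu
  rw [← (ℝ ∙ u).finrank_add_finrank_orthogonal, finrank_span_singleton hu0, add_comm]

/-- The central projection from `0` onto the affine hyperplane `u^⊥ + t u`, followed by the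
translation of that hyperplane to `u^⊥`. -/
def centralProjection (u : E) (t : ℝ) (x : E) : (ℝ ∙ u)ᗮ :=
  (ℝ ∙ u)ᗮ.orthogonalProjectionOnto (⟪t⁻¹ • u, x⟫⁻¹ • x)

lemma inv_inner_smul_eq_smul_add_centralProjection (hu : ‖u‖ = 1) {t : ℝ} (ht : t ≠ 0) {x : E}
    (hx : ⟪t⁻¹ • u, x⟫ ≠ 0) : ⟪t⁻¹ • u, x⟫⁻¹ • x = t • u + (centralProjection u t x : E) := by
  obtain ⟨s, y, hsy⟩ := exists_smul_add_orthogonal_eq u (⟪t⁻¹ • u, x⟫⁻¹ • x)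
  have hs : s = t := by
    rw [← inner_smul_add_orthogonal hu s y, hsy, real_inner_smul_right,
      ← mul_inv_cancel_left₀ ht ⟪u, x⟫, ← real_inner_smul_left, mul_left_comm,
      inv_mul_cancel₀ hx, mul_one]
  rw [centralProjection, ← hsy, orthogonalProjectionOnto_smul_add, hs]

variable [MeasurableSpace E] [BorelSpace E]

lemma measurableSet_hyperplaneSection (hS : MeasurableSet S) (u : E) (t : ℝ) :
    MeasurableSet (hyperplaneSection S u t) :=
  (by fun_prop : Measurable fun y : (ℝ ∙ u)ᗮ => t • u + (y : E)) hS

variable [FiniteDimensional ℝ E]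

lemma volume_eq_lintegral_hyperplaneSection (hu : ‖u‖ = 1) (hS : MeasurableSet S) :
    volume S = ∫⁻ t : ℝ, volume (hyperplaneSection S u t) := by
  have hmp := measurePreserving_smul_add hu
  rw [← hmp.measure_preimage hS.nullMeasurableSet, Measure.volume_eq_prod,
    Measure.prod_apply (hmp.measurable hS)]
  rfl

lemma volume_sectionCone (hu : ‖u‖ = 1) (hS : MeasurableSet S) {t : ℝ} (ht : 0 < t) :
    volume (sectionCone S (t⁻¹ • u)) =
      ENNReal.ofReal (t / finrank ℝ E) * volume (hyperplaneSection S u t) := by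
  set m := finrank ℝ (ℝ ∙ u)ᗮ with hm
  have hsection (s : ℝ) : volume (hyperplaneSection (sectionCone S (t⁻¹ • u)) u s) =
      (Ioo 0 t).indicator (fun s => ENNReal.ofReal (s ^ m) *
        (ENNReal.ofReal (t ^ m)⁻¹ * volume (hyperplaneSection S u t))) s := by
    by_cases hs : s ∈ Ioo 0 t
    · have hpre : hyperplaneSection (sectionCone S (t⁻¹ • u)) u s =
          ((s / t)⁻¹ • ·) ⁻¹' hyperplaneSection S u t := by
        ext y
        exact (smul_add_mem_sectionCone_iff hu ht s y).trans (and_iff_right hs)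
      rw [hpre, Measure.addHaar_preimage_smul _ (inv_ne_zero (div_pos hs.1 ht).ne'),
        indicator_of_mem hs, inv_pow, inv_inv, ← hm, abs_of_pos (pow_pos (div_pos hs.1 ht) _),
        div_pow, div_eq_mul_inv, ENNReal.ofReal_mul (pow_nonneg hs.1.le _), mul_assoc]
    · have hempty : hyperplaneSection (sectionCone S (t⁻¹ • u)) u s = ∅ :=
        eq_empty_of_forall_notMem fun y hy => hs ((smul_add_mem_sectionCone_iff hu ht s y).1 hy).1
      rw [hempty, measure_empty, indicator_of_notMem hs]
  rw [volume_eq_lintegral_hyperplaneSection hu (measurableSet_sectionCone hS _),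
    lintegral_congr hsection, lintegral_indicator measurableSet_Ioo,
    lintegral_mul_const _ (by fun_prop), setLIntegral_Ioo_ofReal_pow m ht.le, ← mul_assoc,
    ← ENNReal.ofReal_mul (by positivity), ← finrank_orthogonal_add_one hu, ← hm]
  congr 2
  push_cast
  field_simp
  ring

lemma measurePreserving_centralProjection (hu : ‖u‖ = 1) (hS : MeasurableSet S) {t : ℝ}
    (ht : 0 < t) :
    MeasurePreserving (centralProjection u t) (volume.restrict (sectionCone S (t⁻¹ • u)))
      ((t / finrank ℝ E).toNNReal • volume.restrict (hyperplaneSection S u t)) := by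
  have hproj : Measurable (ℝ ∙ u)ᗮ.orthogonalProjectionOnto := by fun_prop
  have hmeas : Measurable (centralProjection u t) :=
    hproj.comp ((by fun_prop : Measurable fun x : E => ⟪t⁻¹ • u, x⟫).inv.smul measurable_id)
  refine ⟨hmeas, Measure.ext fun A hA => ?_⟩
  let T := S ∩ (ℝ ∙ u)ᗮ.orthogonalProjectionOnto ⁻¹' A
  have hcone : centralProjection u t ⁻¹' A ∩ sectionCone S (t⁻¹ • u) =
      sectionCone T (t⁻¹ • u) := by
    ext x
    exact and_comm.trans and_assoc
  have hbase : A ∩ hyperplaneSection S u t = hyperplaneSection T u t := by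
    ext y
    refine and_comm.trans (and_congr_right fun _ => ?_)
    rw [mem_preimage, orthogonalProjectionOnto_smul_add]
  rw [Measure.map_apply hmeas hA, Measure.restrict_apply (hmeas hA), hcone, Measure.smul_apply,
    Measure.restrict_apply hA, hbase, volume_sectionCone hu (hS.inter (hproj hA)) ht]
  rfl

variable {ι : Type*} [Fintype ι] [DecidableEq ι]

lemma coneMoment_inv_smul (hcard : finrank ℝ E = Fintype.card ι) (hu : ‖u‖ = 1)
    (hS : MeasurableSet S) {t : ℝ} (ht : 0 < t) :
    coneMoment ι S (t⁻¹ • u) = ENNReal.ofReal (t / finrank ℝ E) ^ finrank ℝ E *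
      (ENNReal.ofReal t * simplexMoment ι (hyperplaneSection S u t)) := by
  have hgram {x : ι → E} (hx : x ∈ univ.pi fun _ => sectionCone S (t⁻¹ • u)) :
      ENNReal.ofReal (gramVol fun i => ⟪t⁻¹ • u, x i⟫⁻¹ • x i) =
        ENNReal.ofReal t * ENNReal.ofReal (simplexVol fun i => centralProjection u t (x i)) := by
    have hinner (i : ι) : ⟪t⁻¹ • u, x i⟫ ≠ 0 := (hx i (mem_univ i)).1.1.ne'
    simp only [inv_inner_smul_eq_smul_add_centralProjection hu ht.ne' (hinner _)]
    rw [gramVol_smul_add_orthogonal hcard hu, abs_of_pos ht, ENNReal.ofReal_mul ht.le]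
  have hproj := measurePreserving_pi _ _ fun _ : ι => measurePreserving_centralProjection hu hS ht
  rw [coneMoment, setLIntegral_congr_fun
    (MeasurableSet.univ_pi fun _ => measurableSet_sectionCone hS _) fun x => hgram,
    lintegral_const_mul' _ _ ENNReal.ofReal_ne_top, volume_pi, Measure.restrict_pi_pi,
    hproj.lintegral_comp (f := fun y => ENNReal.ofReal (simplexVol y)) measurable_ofReal_simplexVol,
    pi_const_smul, lintegral_smul_measure, ← hcard, mul_left_comm]
  rfl

lemma simplexMoment_hyperplaneSection (hcard : finrank ℝ E = Fintype.card ι) (hu : ‖u‖ = 1)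
    (hS : MeasurableSet S) {t : ℝ} (ht : 0 < t) :
    simplexMoment ι (hyperplaneSection S u t) = ENNReal.ofReal (finrank ℝ E ^ finrank ℝ E) *
      (ENNReal.ofReal (t ^ (finrank ℝ E + 1))⁻¹ * coneMoment ι S (t⁻¹ • u)) := by
  rw [coneMoment_inv_smul hcard hu hS ht, ← ENNReal.ofReal_pow (by positivity)]
  simp only [← mul_assoc]
  rw [← ENNReal.ofReal_mul (by positivity), ← ENNReal.ofReal_mul (by positivity),
    ← ENNReal.ofReal_mul (by positivity)]
  have hconst : (finrank ℝ E : ℝ) ^ finrank ℝ E * (t ^ (finrank ℝ E + 1))⁻¹ *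
      (t / finrank ℝ E) ^ finrank ℝ E * t = 1 := by
    have hpos : 0 < finrank ℝ E := finrank_orthogonal_add_one hu ▸ Nat.succ_pos _
    rw [div_pow, pow_succ]
    field_simp
  rw [hconst, ENNReal.ofReal_one, one_mul]

lemma setLIntegral_Ioi_simplexMoment_hyperplaneSection (hcard : finrank ℝ E = Fintype.card ι)
    (hS : MeasurableSet S) (θ : sphere (0 : E) 1) :
    ∫⁻ t in Ioi 0, simplexMoment ι (hyperplaneSection S θ t) =
      ENNReal.ofReal (finrank ℝ E ^ finrank ℝ E) * ∫⁻ t in Ioi (0 : ℝ),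
        ENNReal.ofReal (t ^ (finrank ℝ E + 1))⁻¹ * coneMoment ι S (t⁻¹ • (θ : E)) := by
  rw [← lintegral_const_mul' _ _ ENNReal.ofReal_ne_top]
  exact setLIntegral_congr_fun measurableSet_Ioi fun t ht =>
    simplexMoment_hyperplaneSection hcard (norm_eq_of_mem_sphere θ) hS ht

lemma measurable_setLIntegral_Ioi_simplexMoment_hyperplaneSection
    (hcard : finrank ℝ E = Fintype.card ι) (hS : MeasurableSet S) :
    Measurable fun θ : sphere (0 : E) 1 =>
      ∫⁻ t in Ioi 0, simplexMoment ι (hyperplaneSection S θ t) := by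
  have hcone := measurable_coneMoment (ι := ι) hS
  simp only [setLIntegral_Ioi_simplexMoment_hyperplaneSection hcard hS]
  exact (Measurable.lintegral_prod_right' (by fun_prop : Measurable
    fun q : sphere (0 : E) 1 × ℝ => ENNReal.ofReal (q.2 ^ (finrank ℝ E + 1))⁻¹ *
      coneMoment ι S (q.2⁻¹ • (q.1 : E)))).const_mul _

lemma lintegral_setLIntegral_Ioi_simplexMoment_hyperplaneSection [Nontrivial E]
    (hcard : finrank ℝ E = Fintype.card ι) (hS : MeasurableSet S) :
    ∫⁻ θ : sphere (0 : E) 1, ∫⁻ t in Ioi 0, simplexMoment ι (hyperplaneSection S θ t)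
      ∂volume ∂volume.toSphere = volume S ^ finrank ℝ E := by
  have hpos : (0 : ℝ) < finrank ℝ E := Nat.cast_pos.2 finrank_pos
  simp only [setLIntegral_Ioi_simplexMoment_hyperplaneSection hcard hS]
  rw [lintegral_const_mul' _ _ ENNReal.ofReal_ne_top,
    ← lintegral_eq_lintegral_toSphere_inv volume (measurable_coneMoment hS),
    lintegral_coneMoment hcard hS, ENNReal.ofReal_pow hpos.le, ENNReal.ofReal_natCast, ← mul_pow,
    ENNReal.mul_div_cancel (Nat.cast_ne_zero.2 finrank_pos.ne') (ENNReal.natCast_ne_top _)]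

lemma lintegral_simplexMoment_hyperplaneSection_eq_add (hS : MeasurableSet S) (u : E) :
    ∫⁻ t : ℝ, simplexMoment ι (hyperplaneSection S u t) =
      (∫⁻ t in Ioi 0, simplexMoment ι (hyperplaneSection S u t)) +
        ∫⁻ t in Ioi 0, simplexMoment ι (hyperplaneSection (Neg.neg ⁻¹' S) u t) := by
  have hsection (t : ℝ) : simplexMoment ι (hyperplaneSection (Neg.neg ⁻¹' S) u t) =
      simplexMoment ι (hyperplaneSection S u (-t)) := by
    rw [← simplexMoment_preimage_linearIsometryEquiv (LinearIsometryEquiv.neg ℝ)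
      (measurableSet_hyperplaneSection hS u (-t))]
    congr 1
    ext y
    simp [hyperplaneSection, add_comm]
  rw [← lintegral_add_compl _ (measurableSet_Ioi (a := (0 : ℝ))), compl_Ioi,
    ← setLIntegral_congr Iio_ae_eq_Iic]
  simp only [hsection]
  congr 1
  have hIoi : Ioi (0 : ℝ) = Neg.neg ⁻¹' Iio 0 := by ext; simp
  rw [hIoi]
  exact ((Measure.measurePreserving_neg (volume : Measure ℝ)).setLIntegral_comp_preimage_emb
    (MeasurableEquiv.neg ℝ).measurableEmbedding _ _).symm

-- The affine Blaschke–Petkantschin formula for hyperplanes: every `N`-tuple of points of `S` in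
-- general position lies in exactly one hyperplane, which has two parametrizations `(θ, t)`.
lemma lintegral_simplexMoment_hyperplaneSection [Nontrivial E]
    (hcard : finrank ℝ E = Fintype.card ι) (hS : MeasurableSet S) :
    ∫⁻ θ : sphere (0 : E) 1, ∫⁻ t : ℝ, simplexMoment ι (hyperplaneSection S θ t)
      ∂volume ∂volume.toSphere = 2 * volume S ^ finrank ℝ E := by
  simp only [lintegral_simplexMoment_hyperplaneSection_eq_add hS]
  rw [lintegral_add_left (measurable_setLIntegral_Ioi_simplexMoment_hyperplaneSection hcard hS),
    lintegral_setLIntegral_Ioi_simplexMoment_hyperplaneSection hcard hS,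
    lintegral_setLIntegral_Ioi_simplexMoment_hyperplaneSection hcard (measurable_neg hS),
    Measure.measure_preimage_neg, two_mul]

end HyperplaneSection

section UnitBall

lemma ballVol_pos (m : ℕ) : 0 < ballVol m :=
  div_pos (Real.rpow_pos_of_pos Real.pi_pos _) (Real.Gamma_pos_of_pos (by positivity))

variable {E : Type*} [NormedAddCommGroup E] [InnerProductSpace ℝ E] {u : E}

lemma hyperplaneSection_ball (hu : ‖u‖ = 1) (t : ℝ) :
    hyperplaneSection (ball 0 1) u t = ball 0 √(1 - t ^ 2) := by
  ext y
  rw [mem_ball_zero_iff, Real.lt_sqrt (norm_nonneg _), lt_sub_iff_add_lt',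
    ← norm_smul_add_orthogonal_sq hu, sq_lt_one_iff₀ (norm_nonneg _), ← mem_ball_zero_iff]
  rfl

variable [FiniteDimensional ℝ E] [MeasurableSpace E] [BorelSpace E] {m : ℕ}

lemma volume_ball_eq_ofReal_ballVol [Nontrivial E] (x : E) (r : ℝ) :
    volume (ball x r) =
      ENNReal.ofReal r ^ finrank ℝ E * ENNReal.ofReal (ballVol (finrank ℝ E)) := by
  rw [InnerProductSpace.volume_ball, ballVol, Real.sqrt_eq_rpow,
    ← Real.rpow_mul_natCast Real.pi_nonneg, one_div_mul_eq_div]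

lemma lintegral_ofReal_sqrt_one_sub_sq_pow (hm : m ≠ 0) :
    ∫⁻ t : ℝ, ENNReal.ofReal √(1 - t ^ 2) ^ m = ENNReal.ofReal (ballVol (m + 1) / ballVol m) := by
  obtain ⟨u, hu⟩ := exists_norm_eq (EuclideanSpace ℝ (Fin (m + 1))) zero_le_one
  have hdim : finrank ℝ (ℝ ∙ u)ᗮ = m := by simpa using finrank_orthogonal_add_one hu
  have : Nontrivial (ℝ ∙ u)ᗮ := nontrivial_of_finrank_pos (R := ℝ) (by rw [hdim]; exact hm.pos)
  have hball := volume_eq_lintegral_hyperplaneSection hu (measurableSet_ball (x := 0) (ε := 1))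
  simp only [hyperplaneSection_ball hu, volume_ball_eq_ofReal_ballVol, hdim,
    finrank_euclideanSpace_fin, ENNReal.ofReal_one, one_pow, one_mul] at hball
  rw [lintegral_mul_const _ (by fun_prop)] at hball
  rw [ENNReal.ofReal_div_of_pos (ballVol_pos m), hball, ENNReal.mul_div_cancel_right
    (ENNReal.ofReal_pos.2 (ballVol_pos m)).ne' ENNReal.ofReal_ne_top]

variable {ι : Type*} [Fintype ι] [DecidableEq ι]

lemma simplexMoment_unitBall_congr {G : Type*} [NormedAddCommGroup G] [InnerProductSpace ℝ G]
    [FiniteDimensional ℝ G] [MeasurableSpace G] [BorelSpace G] (h : finrank ℝ E = finrank ℝ G) :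
    simplexMoment ι (ball (0 : E) 1) = simplexMoment ι (ball (0 : G) 1) := by
  let e : E ≃ₗᵢ[ℝ] G := (stdOrthonormalBasis ℝ E).equiv (stdOrthonormalBasis ℝ G) (finCongr h)
  rw [← simplexMoment_preimage_linearIsometryEquiv e measurableSet_ball, e.preimage_ball,
    map_zero]

lemma two_mul_volume_unitBall_pow (hm : m ≠ 0) (hE : finrank ℝ E = m + 1) :
    2 * volume (ball (0 : E) 1) ^ (m + 1) =
      simplexMoment (Fin (m + 1)) (ball (0 : EuclideanSpace ℝ (Fin m)) 1) *
        ENNReal.ofReal (ballVol (m * (m + 2) + 1) / ballVol (m * (m + 2))) *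
          (volume : Measure E).toSphere univ := by
  have : Nontrivial E := nontrivial_of_finrank_pos (R := ℝ) (by lia)
  have hsection (θ : sphere (0 : E) 1) (t : ℝ) :
      simplexMoment (Fin (m + 1)) (hyperplaneSection (ball (0 : E) 1) θ t) =
        ENNReal.ofReal √(1 - t ^ 2) ^ (m * (m + 2)) *
          simplexMoment (Fin (m + 1)) (ball (0 : EuclideanSpace ℝ (Fin m)) 1) := by
    have hθ := norm_eq_of_mem_sphere θ
    have hdim : finrank ℝ (ℝ ∙ (θ : E))ᗮ = m := by simpa [hE] using finrank_orthogonal_add_one hθ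
    have : Nontrivial (ℝ ∙ (θ : E))ᗮ := nontrivial_of_finrank_pos (R := ℝ) (by lia)
    rw [hyperplaneSection_ball hθ, simplexMoment_ball (by simp [hdim]) (Real.sqrt_nonneg _), hdim,
      simplexMoment_unitBall_congr (G := EuclideanSpace ℝ (Fin m)) (by simpa using hdim)]
  have hBP := lintegral_simplexMoment_hyperplaneSection (ι := Fin (m + 1)) (by simpa using hE)
    (measurableSet_ball (x := (0 : E)) (ε := 1))
  simp only [hE, hsection] at hBP
  rw [← hBP, lintegral_const, lintegral_mul_const _ (by fun_prop),
    lintegral_ofReal_sqrt_one_sub_sq_pow (by positivity), mul_comm (ENNReal.ofReal _)]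

end UnitBall

section Gardner

variable {E : Type*} [NormedAddCommGroup E] [InnerProductSpace ℝ E] [FiniteDimensional ℝ E]
  [MeasurableSpace E] [BorelSpace E] {S : Set E} {m : ℕ}

lemma simplexMoment_mul_lintegral_hyperplaneSection_le (hm : m ≠ 0) (hE : finrank ℝ E = m + 1)
    (hS : MeasurableSet S) :
    simplexMoment (Fin (m + 1)) (ball (0 : EuclideanSpace ℝ (Fin m)) 1) *
      ∫⁻ θ : sphere (0 : E) 1, ∫⁻ t : ℝ,
        (volume (hyperplaneSection S θ t) / ENNReal.ofReal (ballVol m)) ^ (m + 2)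
          ∂volume ∂volume.toSphere ≤ 2 * volume S ^ (m + 1) := by
  have : Nontrivial E := nontrivial_of_finrank_pos (R := ℝ) (by lia)
  have hBP := lintegral_simplexMoment_hyperplaneSection (ι := Fin (m + 1)) (by simpa using hE) hS
  rw [hE] at hBP
  rw [← hBP]
  refine (lintegral_const_mul_le _ _).trans (lintegral_mono fun θ => ?_)
  refine (lintegral_const_mul_le _ _).trans (lintegral_mono fun t => ?_)
  have hdim : finrank ℝ (ℝ ∙ (θ : E))ᗮ = m := by
    simpa [hE] using finrank_orthogonal_add_one (norm_eq_of_mem_sphere θ)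
  have : Nontrivial (ℝ ∙ (θ : E))ᗮ := nontrivial_of_finrank_pos (R := ℝ) (by lia)
  have hBG := mul_volume_pow_le_simplexMoment (ι := Fin (m + 1)) (by simp [hdim])
    (measurableSet_hyperplaneSection hS (θ : E) t)
  rwa [volume_ball_eq_ofReal_ballVol, ENNReal.ofReal_one, one_pow, one_mul, hdim,
    simplexMoment_unitBall_congr (G := EuclideanSpace ℝ (Fin m)) (by simpa using hdim)] at hBG

lemma volume_unitBall_pow_mul_lintegral_hyperplaneSection_le (hm : m ≠ 0)
    (hE : finrank ℝ E = m + 1) (hS : MeasurableSet S) :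
    volume (ball (0 : E) 1) ^ (m + 1) * ∫⁻ θ : sphere (0 : E) 1, ∫⁻ t : ℝ,
        (volume (hyperplaneSection S θ t) / ENNReal.ofReal (ballVol m)) ^ (m + 2)
          ∂volume ∂volume.toSphere ≤
      ENNReal.ofReal (ballVol (m * (m + 2) + 1) / ballVol (m * (m + 2))) *
        (volume : Measure E).toSphere univ * volume S ^ (m + 1) := by
  set Y := ∫⁻ θ : sphere (0 : E) 1, ∫⁻ t : ℝ,
    (volume (hyperplaneSection S θ t) / ENNReal.ofReal (ballVol m)) ^ (m + 2)
      ∂volume ∂volume.toSphere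
  set c := simplexMoment (Fin (m + 1)) (ball (0 : EuclideanSpace ℝ (Fin m)) 1)
  set q := ENNReal.ofReal (ballVol (m * (m + 2) + 1) / ballVol (m * (m + 2)))
  set σ := (volume : Measure E).toSphere univ
  refine (ENNReal.mul_le_mul_iff_right two_ne_zero ENNReal.ofNat_ne_top).1 ?_
  calc 2 * (volume (ball (0 : E) 1) ^ (m + 1) * Y)
      = q * σ * (c * Y) := by rw [← mul_assoc, two_mul_volume_unitBall_pow hm hE]; ring
    _ ≤ q * σ * (2 * volume S ^ (m + 1)) := by
        gcongr q * σ * ?_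
        exact simplexMoment_mul_lintegral_hyperplaneSection_le hm hE hS
    _ = 2 * (q * σ * volume S ^ (m + 1)) := by ring

lemma inv_toSphere_univ_mul_lintegral_hyperplaneSection_le (hm : m ≠ 0)
    (hE : finrank ℝ E = m + 1) (hS : MeasurableSet S) :
    ((volume : Measure E).toSphere univ)⁻¹ * ∫⁻ θ : sphere (0 : E) 1, ∫⁻ t : ℝ,
        (volume (hyperplaneSection S θ t) / ENNReal.ofReal (ballVol m)) ^ (m + 2)
          ∂volume ∂volume.toSphere ≤
      ENNReal.ofReal (ballVol (m * (m + 2) + 1) / ballVol (m * (m + 2)) /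
        ballVol (m + 1) ^ (m + 1)) * volume S ^ (m + 1) := by
  have : Nontrivial E := nontrivial_of_finrank_pos (R := ℝ) (by lia)
  have hball : volume (ball (0 : E) 1) ^ (m + 1) = ENNReal.ofReal (ballVol (m + 1) ^ (m + 1)) := by
    rw [volume_ball_eq_ofReal_ballVol, hE, ENNReal.ofReal_one, one_pow, one_mul,
      ENNReal.ofReal_pow (ballVol_pos _).le]
  have hpos : 0 < ballVol (m + 1) ^ (m + 1) := pow_pos (ballVol_pos _) _
  have hσ : (volume : Measure E).toSphere univ ≠ 0 := by
    rw [Measure.toSphere_apply_univ]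
    exact mul_ne_zero (by simp [hE]) (measure_ball_pos _ _ one_pos).ne'
  rw [ENNReal.inv_mul_le_iff hσ (measure_ne_top _ _), ENNReal.ofReal_div_of_pos hpos,
    ← ENNReal.mul_div_right_comm, ← mul_div_assoc, ← mul_assoc, mul_comm _ (ENNReal.ofReal _),
    ENNReal.le_div_iff_mul_le (.inl (ENNReal.ofReal_pos.2 hpos).ne') (.inl ENNReal.ofReal_ne_top),
    mul_comm, ← hball]
  exact volume_unitBall_pow_mul_lintegral_hyperplaneSection_le hm hE hS

end Gardner

lemma lintegral_sectVol_pow_eq (n k : ℕ) (S : Set (EuclideanSpace ℝ (Fin n))) {a : ℝ}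
    (ha : 0 < a) :
    ∫⁻ θ, ∫⁻ t : ℝ, sectVol n S θ t ^ k ∂volume ∂(sphMeasure n) =
      ENNReal.ofReal a ^ k * (((volume : Measure (EuclideanSpace ℝ (Fin n))).toSphere univ)⁻¹ *
        ∫⁻ θ : sphere (0 : EuclideanSpace ℝ (Fin n)) 1, ∫⁻ t : ℝ,
          (volume (hyperplaneSection S θ t) / ENNReal.ofReal a) ^ k ∂volume ∂volume.toSphere) := by
  have hscale (θ : sphere (0 : EuclideanSpace ℝ (Fin n)) 1) (t : ℝ) :
      sectVol n S θ t ^ k = ENNReal.ofReal a ^ k *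
        (volume (hyperplaneSection S θ t) / ENNReal.ofReal a) ^ k := by
    rw [← mul_pow, ENNReal.mul_div_cancel (ENNReal.ofReal_pos.2 ha).ne' ENNReal.ofReal_ne_top,
      sectVol, hyperplaneSection]
  have hfin : ENNReal.ofReal a ^ k ≠ ∞ := ENNReal.pow_ne_top ENNReal.ofReal_ne_top
  simp only [hscale, lintegral_const_mul' _ _ hfin, sphMeasure, lintegral_smul_measure,
    smul_eq_mul]

theorem stmt10_general (n : ℕ) (hn : 2 ≤ n) (S : Set (EuclideanSpace ℝ (Fin n)))
    (hS : MeasurableSet S) :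
    (∫⁻ θ, ∫⁻ t : ℝ, sectVol n S θ t ^ (n + 1) ∂volume ∂(sphMeasure n)) ≤
      ENNReal.ofReal (ballVol (n - 1) ^ (n + 1) * ballVol (n ^ 2) /
          (ballVol n ^ n * ballVol (n ^ 2 - 1))) *
        volume S ^ n := by
  obtain ⟨m, rfl⟩ : ∃ m, n = m + 1 := ⟨n - 1, by lia⟩
  have hm : m ≠ 0 := by lia
  have hsq : (m + 1) ^ 2 = m * (m + 2) + 1 := by ring
  have hconst : ballVol m ^ (m + 2) *
      (ballVol (m * (m + 2) + 1) / ballVol (m * (m + 2)) / ballVol (m + 1) ^ (m + 1)) =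
      ballVol m ^ (m + 2) * ballVol (m * (m + 2) + 1) /
        (ballVol (m + 1) ^ (m + 1) * ballVol (m * (m + 2))) := by
    rw [div_div, mul_div_assoc, mul_comm (ballVol (m * (m + 2)))]
  rw [lintegral_sectVol_pow_eq _ _ _ (ballVol_pos m), hsq, Nat.add_sub_cancel, Nat.add_sub_cancel,
    ← hconst, ENNReal.ofReal_mul (pow_nonneg (ballVol_pos m).le _),
    ENNReal.ofReal_pow (ballVol_pos m).le, mul_assoc]
  gcongr ENNReal.ofReal (ballVol m) ^ (m + 2) * ?_
  exact inv_toSphere_univ_mul_lintegral_hyperplaneSection_le hm finrank_euclideanSpace_fin hS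

/-- Gardner's sharp affine inequality for hyperplane sections of a bounded Borel set
(case `k = n-1`). -/
theorem stmt10 (n : ℕ) (hn : 2 ≤ n) (S : Set (EuclideanSpace ℝ (Fin n)))
    (hS : MeasurableSet S) (hSb : Bornology.IsBounded S) :
    (∫⁻ θ, ∫⁻ t : ℝ, sectVol n S θ t ^ (n + 1) ∂volume ∂(sphMeasure n)) ≤
      ENNReal.ofReal (ballVol (n - 1) ^ (n + 1) * ballVol (n ^ 2) /
          (ballVol n ^ n * ballVol (n ^ 2 - 1))) *
        volume S ^ n :=
  stmt10_general n hn S hS
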